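/- arXiv:2304.13715 — 2 statements merged into one kernel-verified Lean document; each statement's English description precedes it below -/
import Mathlib

section
/- For every positive integer Δ and every ν > 0, there exists μ > 0 (depending on Δ and ν) such that for every positive integer s there exists M (depending on Δ, ν and s) such that the following holds: if H is a bipartite graph with maximum degree Δ(H) ≤ Δ, every connected component of H has at most s vertices, and |V(H)| ≥ M, and G is a graph with minimum degree δ(G) ≥ (1−μ)·|V(H)| and |V(G)| ≥ (1+ν)·|V(H)|, then H is a minor of G. -/
open SimpleGraph

/-- The degree of a vertex: the number of neighbours. -/
noncomputable def deg {V : Type*} (G : SimpleGraph V) (v : V) : ℕ :=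
  (G.neighborSet v).ncard

/-- The minimum degree of a graph. -/
noncomputable def minDeg {V : Type*} (G : SimpleGraph V) : ℕ :=
  sInf (Set.range (deg G))

/-- The maximum degree of a graph. -/
noncomputable def maxDeg {V : Type*} (G : SimpleGraph V) : ℕ :=
  sSup (Set.range (deg G))

/-- The density of a graph: number of edges divided by number of vertices. -/
noncomputable def density {V : Type*} (G : SimpleGraph V) : ℝ :=
  (G.edgeSet.ncard : ℝ) / (Nat.card V : ℝ)

/-- The density of a subgraph of `G`. -/
noncomputable def subDensity {V : Type*} {G : SimpleGraph V} (J : G.Subgraph) : ℝ :=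
  (J.edgeSet.ncard : ℝ) / (J.verts.ncard : ℝ)

/-- A model (branch decomposition) of `H` in `G`: pairwise disjoint branch sets,
each inducing a connected (in particular nonempty) subgraph, with an edge of `G`
between the branch sets of any two adjacent vertices of `H`. -/
def IsModel {α β : Type*} (H : SimpleGraph α) (G : SimpleGraph β) (μ : α → Set β) : Prop :=
  (∀ u v : α, u ≠ v → Disjoint (μ u) (μ v)) ∧
  (∀ v : α, (G.induce (μ v)).Connected) ∧
  (∀ u v : α, H.Adj u v → ∃ a ∈ μ u, ∃ b ∈ μ v, G.Adj a b)

/-- `H` is a minor of `G`: there is a model of `H` in `G`. -/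
def IsMinor {α β : Type*} (H : SimpleGraph α) (G : SimpleGraph β) : Prop :=
  ∃ μ : α → Set β, IsModel H G μ

/-- `H` is isomorphic to a subgraph of `G`. -/
def IsSubgraphEmb {α β : Type*} (H : SimpleGraph α) (G : SimpleGraph β) : Prop :=
  ∃ f : α ↪ β, ∀ u v : α, H.Adj u v → G.Adj (f u) (f v)

/-- A (proper) separation of `G`. -/
def IsSeparation {V : Type*} (G : SimpleGraph V) (A B : Set V) : Prop :=
  A ∪ B = Set.univ ∧ ¬ A ⊆ B ∧ ¬ B ⊆ A ∧
    ∀ u ∈ A \ B, ∀ v ∈ B \ A, ¬ G.Adj u v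

/-- The pair `(G, X)` is `k`-dense: `X` is a proper subset of the vertices, and for
every separation of order at most `k` one of the two sides is contained in `X`. -/
def KDense {V : Type*} (G : SimpleGraph V) (X : Set V) (k : ℝ) : Prop :=
  X ≠ Set.univ ∧
  ∀ A B : Set V, IsSeparation G A B → ((A ∩ B).ncard : ℝ) ≤ k →
    A \ B ⊆ X ∨ B \ A ⊆ X

/-- The pair `(G, X)` is `(d, k)`-dense. -/
def DensePair {V : Type*} (G : SimpleGraph V) (X : Set V) (d k : ℝ) : Prop :=
  X ≠ Set.univ ∧
  (∀ v : V, v ∉ X → d ≤ (deg G v : ℝ)) ∧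
  ∀ A B : Set V, IsSeparation G A B → ((A ∩ B).ncard : ℝ) ≤ k →
    A \ B ⊆ X ∨ B \ A ⊆ X

/-- A graph family (of finite graphs, represented on the vertex sets `Fin n`) with
strongly sublinear separators: closed under subgraphs, and there are `c > 0` and
`0 < β < 1` such that every member has a balanced separation of order ≤ `c * n ^ β`. -/
def SSLS (F : ∀ n : ℕ, SimpleGraph (Fin n) → Prop) : Prop :=
  (∀ (n m : ℕ) (G : SimpleGraph (Fin n)) (H : SimpleGraph (Fin m)),
      F n G → IsSubgraphEmb H G → F m H) ∧
  ∃ c : ℝ, 0 < c ∧ ∃ β : ℝ, 0 < β ∧ β < 1 ∧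
    ∀ (n : ℕ) (G : SimpleGraph (Fin n)), F n G →
      ∃ A B : Set (Fin n), IsSeparation G A B ∧
        (A.ncard : ℝ) ≤ 2 / 3 * n ∧ (B.ncard : ℝ) ≤ 2 / 3 * n ∧
        ((A ∩ B).ncard : ℝ) ≤ c * (n : ℝ) ^ (β : ℝ)

/-- The extremal function `c(H)`: the supremum of densities of non-null graphs
with no `H` minor. -/
noncomputable def extremalFunction {α : Type*} (H : SimpleGraph α) : ℝ :=
  sSup {x : ℝ | ∃ (n : ℕ) (G : SimpleGraph (Fin n)), 0 < n ∧ ¬ IsMinor H G ∧ density G = x}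

/-- `G` is `H`-linked: `G` has at least as many vertices as `H` and every injection
`φ` of the vertices of `H` into those of `G` extends to a `φ`-rooted model of `H`. -/
def IsLinked {α β : Type*} (H : SimpleGraph α) (G : SimpleGraph β) : Prop :=
  Nat.card α ≤ Nat.card β ∧
  ∀ φ : α ↪ β, ∃ μ : α → Set β, IsModel H G μ ∧ ∀ v : α, φ v ∈ μ v

/-- `H'` is obtained from `H` by a simple edge extension: adding a new vertex joined
by an edge to at most one vertex of `H`, or two new vertices joined by an edge. -/
def IsSimpleEdgeExt {α β : Type*} (H : SimpleGraph α) (H' : SimpleGraph β) : Prop :=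
  ∃ f : α ↪ β,
    ((∃ x : β, x ∉ Set.range f ∧ (∀ y : β, y = x ∨ y ∈ Set.range f) ∧
       ((∀ u v : β, H'.Adj u v ↔ ∃ a b : α, u = f a ∧ v = f b ∧ H.Adj a b) ∨
        (∃ a : α, ∀ u v : β, H'.Adj u v ↔
          ((∃ a' b' : α, u = f a' ∧ v = f b' ∧ H.Adj a' b') ∨
           (u = x ∧ v = f a) ∨ (v = x ∧ u = f a))))) ∨
     (∃ x y : β, x ≠ y ∧ x ∉ Set.range f ∧ y ∉ Set.range f ∧
       (∀ z : β, z = x ∨ z = y ∨ z ∈ Set.range f) ∧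
       (∀ u v : β, H'.Adj u v ↔
         ((∃ a b : α, u = f a ∧ v = f b ∧ H.Adj a b) ∨
          (u = x ∧ v = y) ∨ (u = y ∧ v = x)))))

/-- `J` is a `k`-edge extension of `H`: obtained by a sequence of at most `k`
simple edge extensions (up to isomorphism). -/
def IsKEdgeExt {α β : Type*} (k : ℕ) (H : SimpleGraph α) (J : SimpleGraph β) : Prop :=
  ∃ j : ℕ, j ≤ k ∧ ∃ c : ℕ → (Σ n : ℕ, SimpleGraph (Fin n)),
    Nonempty (H ≃g (c 0).2) ∧ Nonempty (J ≃g (c j).2) ∧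
    ∀ i : ℕ, i < j → IsSimpleEdgeExt (c i).2 (c (i + 1)).2

/-- `G` is `(H + k)`-linked: `G` is `J`-linked for every `k`-edge extension `J` of `H`. -/
def IsPlusKLinked {α β : Type*} (H : SimpleGraph α) (k : ℕ) (G : SimpleGraph β) : Prop :=
  ∀ (m : ℕ) (J : SimpleGraph (Fin m)), IsKEdgeExt k H J → IsLinked J G

-- The connectivity of `G`: the minimum order of a separation, except for complete
-- graphs, where it is the number of vertices minus one.
open scoped Classical in
noncomputable def connectivity {V : Type*} (G : SimpleGraph V) : ℕ :=
  if ∀ u v : V, u ≠ v → G.Adj u v then Nat.card V - 1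
  else sInf {k : ℕ | ∃ A B : Set V, IsSeparation G A B ∧ (A ∩ B).ncard = k}

/-!
Write `n = |H|`. Components of `H` are small and bipartite, so a disjoint union of copies of
`K_{t,t}`, with `t` large and fixed, on slightly more than `n` vertices contains `H`: in each copy
place components one by one, orienting each bipartition so that the two sides fill up evenly.

If `|G| = O(n)` and `G` has minimum degree above `n / 2`, such a tiling is found by taking a maximal
one and augmenting it through bicliques between tiles and the uncovered vertices. The same applies
to any minor of `G` of average degree at least `(1 + ε) n`: in a smallest such minor every edge lies
in about `n / 2` triangles, so a few closed neighbourhoods span a subgraph on `O(n)` vertices of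
minimum degree above `n / 2`.

If `|G|` is much larger than `n` and no such minor exists, then the average degree of `G` is within
`0.2%` of its minimum degree. Contracting an edge in fewer than `n / 4` triangles raises the average
degree, so after few contractions every edge lies in at least `n / 4` triangles. Most vertices are
then far from all contractions and have a neighbourhood of size `O(n)` with quadratically many
edges; by the Kővári–Sós–Turán theorem this again yields many disjoint copies of `K_{t,t}`.
-/

universe u v

section

open scoped Classical Finset

section Counting

lemma sum_le_card_filter_mul_add {ι R : Type*} [Semiring R] [PartialOrder R] [IsOrderedRing R]
    (X : Finset ι) (p : ι → Prop) [DecidablePred p] {f : ι → R} {a b : R}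
    (hp : ∀ i ∈ X, p i → f i ≤ a + b) (hnp : ∀ i ∈ X, ¬p i → f i ≤ b) :
    ∑ i ∈ X, f i ≤ #{i ∈ X | p i} * a + #X * b := by
  calc ∑ i ∈ X, f i ≤ ∑ i ∈ X, ((if p i then a else 0) + b) := by
        refine Finset.sum_le_sum fun i hi => ?_
        split_ifs with h
        · exact hp i hi h
        · simpa using hnp i hi h
    _ = #{i ∈ X | p i} * a + #X * b := by
        rw [Finset.sum_add_distrib, ← Finset.sum_filter, Finset.sum_const, Finset.sum_const,
          nsmul_eq_mul, nsmul_eq_mul]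

end Counting

section Bicliques

variable {V : Type*} {G : SimpleGraph V} {t : ℕ} {A B S T X Y : Finset V}

/-- The number of neighbours of `v` in the finite set `X`. -/
noncomputable def degIn (G : SimpleGraph V) (X : Finset V) (v : V) : ℕ :=
  #{w ∈ X | G.Adj v w}

lemma degIn_mono (h : X ⊆ Y) (v : V) : degIn G X v ≤ degIn G Y v :=
  Finset.card_le_card (Finset.filter_subset_filter _ h)

lemma degIn_le_card (G : SimpleGraph V) (X : Finset V) (v : V) : degIn G X v ≤ #X :=
  Finset.card_filter_le _ _

lemma degIn_union (G : SimpleGraph V) (h : Disjoint X Y) (v : V) :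
    degIn G (X ∪ Y) v = degIn G X v + degIn G Y v := by
  rw [degIn, Finset.filter_union,
    Finset.card_union_of_disjoint (Finset.disjoint_filter_filter h), degIn, degIn]

lemma sum_degIn_comm (G : SimpleGraph V) (X Y : Finset V) :
    ∑ v ∈ X, degIn G Y v = ∑ v ∈ Y, degIn G X v := by
  simp_rw [degIn, Finset.card_filter]
  rw [Finset.sum_comm]
  simp_rw [G.adj_comm]

/-- `A` and `B` are the two sides of a copy of `K_{t,t}` in `G`. -/
structure IsBiclique (G : SimpleGraph V) (t : ℕ) (A B : Finset V) : Prop where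
  card_left : #A = t
  card_right : #B = t
  complete : G.IsCompleteBetween (A : Set V) (B : Set V)

namespace IsBiclique

lemma disjoint (h : IsBiclique G t A B) : Disjoint A B :=
  Finset.disjoint_coe.1 h.complete.disjoint

lemma card_union (h : IsBiclique G t A B) : #(A ∪ B) = 2 * t := by
  rw [Finset.card_union_of_disjoint h.disjoint, h.card_left, h.card_right, two_mul]

lemma sdiff {m : ℕ} (h : IsBiclique G (m + t) A B) {A' B' : Finset V} (hA : A' ⊆ A) (hB : B' ⊆ B)
    (hA' : #A' = t) (hB' : #B' = t) : IsBiclique G m (A \ A') (B \ B') where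
  card_left := by rw [Finset.card_sdiff_of_subset hA, h.card_left, hA', Nat.add_sub_cancel]
  card_right := by rw [Finset.card_sdiff_of_subset hB, h.card_right, hB', Nat.add_sub_cancel]
  complete _ ha _ hb := h.complete (Finset.mem_sdiff.1 ha).1 (Finset.mem_sdiff.1 hb).1

end IsBiclique

/-- `S` is a disjoint union of vertex sets of copies of `K_{t,t}` in `G`. -/
inductive IsTiled (G : SimpleGraph V) (t : ℕ) : Finset V → Prop
  | empty : IsTiled G t ∅
  | union_tile {S A B : Finset V} : IsTiled G t S → IsBiclique G t A B → Disjoint S (A ∪ B) →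
      IsTiled G t (S ∪ (A ∪ B))

lemma IsTiled.union (hS : IsTiled G t S) (hT : IsTiled G t T) (h : Disjoint S T) :
    IsTiled G t (S ∪ T) := by
  induction hT with
  | empty => simpa using hS
  | union_tile _ hAB hd ih =>
    rw [Finset.disjoint_union_right] at h
    rw [← Finset.union_assoc]
    exact (ih h.1).union_tile hAB (Finset.disjoint_union_left.2 ⟨h.2, hd⟩)

lemma IsBiclique.isTiled_of_mul (q : ℕ) (h : IsBiclique G (q * t) A B) :
    IsTiled G t (A ∪ B) := by
  induction q generalizing A B with
  | zero =>
    obtain ⟨hA, hB⟩ : A = ∅ ∧ B = ∅ := by simpa using And.intro h.card_left h.card_right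
    simpa [hA, hB] using IsTiled.empty
  | succ q ih =>
    rw [add_one_mul] at h
    obtain ⟨A', hA', hA't⟩ := Finset.exists_subset_card_eq (s := A) (n := t)
      (by rw [h.card_left]; exact Nat.le_add_left _ _)
    obtain ⟨B', hB', hB't⟩ := Finset.exists_subset_card_eq (s := B) (n := t)
      (by rw [h.card_right]; exact Nat.le_add_left _ _)
    have hAB' : IsBiclique G t A' B' := ⟨hA't, hB't, fun a ha b hb => h.complete (hA' ha) (hB' hb)⟩
    have hdisj := h.disjoint
    have hsplit : A ∪ B = (A \ A' ∪ B \ B') ∪ (A' ∪ B') := by grind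
    rw [hsplit]
    exact (ih (h.sdiff hA' hB' hA't hB't)).union_tile hAB'
      (Finset.disjoint_left.2 fun x _ _ => by grind [Finset.disjoint_left])

lemma IsTiled.of_mul (q : ℕ) (h : IsTiled G (q * t) S) : IsTiled G t S := by
  induction h with
  | empty => exact .empty
  | union_tile _ hAB hd ih => exact ih.union (hAB.isTiled_of_mul q) hd

lemma exists_maximal_isTiled (G : SimpleGraph V) (ht : 0 < t) (X : Finset V) :
    ∃ S ⊆ X, IsTiled G t S ∧ ∀ A ⊆ X \ S, ∀ B ⊆ X \ S, ¬IsBiclique G t A B := by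
  obtain ⟨S, hS, hmax⟩ := Finset.exists_max_image {S ∈ X.powerset | IsTiled G t S} Finset.card
    ⟨∅, by simp [IsTiled.empty]⟩
  rw [Finset.mem_filter, Finset.mem_powerset] at hS
  refine ⟨S, hS.1, hS.2, fun A hA B hB hAB => ?_⟩
  have hABX : A ∪ B ⊆ X \ S := Finset.union_subset hA hB
  have hd : Disjoint S (A ∪ B) := Finset.disjoint_sdiff.mono_right hABX
  have hle := hmax (S ∪ (A ∪ B)) (by
    rw [Finset.mem_filter, Finset.mem_powerset]
    exact ⟨Finset.union_subset hS.1 (hABX.trans Finset.sdiff_subset), hS.2.union_tile hAB hd⟩)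
  rw [Finset.card_union_of_disjoint hd, hAB.card_union] at hle
  omega

/-- Each vertex of `Y` selects `t` of its neighbours in `R`; a popular selection is one side of a
complete bipartite graph. -/
lemma exists_isCompleteBetween_of_le_degIn {R : Finset V} {m : ℕ} (hY : ∀ y ∈ Y, t ≤ degIn G R y)
    (hcard : 2 ^ #R * m ≤ #Y) (hm : 0 < m) :
    ∃ A ⊆ R, #A = t ∧ ∃ Z ⊆ Y, #Z = m ∧ G.IsCompleteBetween (A : Set V) (Z : Set V) := by
  have hselect : ∀ y ∈ Y, ∃ A ⊆ R, #A = t ∧ ∀ a ∈ A, G.Adj y a := fun y hy => by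
    obtain ⟨A, hA, hAt⟩ := Finset.exists_subset_card_eq (hY y hy)
    exact ⟨A, hA.trans (Finset.filter_subset _ _), hAt, fun a ha => (Finset.mem_filter.1 (hA ha)).2⟩
  choose! f hfR hft hf using hselect
  obtain ⟨A, hA, hfiber⟩ := Finset.exists_le_card_fiber_of_mul_le_card_of_maps_to
    (fun y hy => Finset.mem_powerset.2 (hfR y hy)) (Finset.powerset_nonempty R)
    (by rwa [Finset.card_powerset])
  obtain ⟨Z, hZ, hZm⟩ := Finset.exists_subset_card_eq hfiber
  have hZf : ∀ z ∈ Z, z ∈ Y ∧ f z = A := fun z hz => Finset.mem_filter.1 (hZ hz)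
  obtain ⟨z, hz⟩ : Z.Nonempty := Finset.card_pos.1 (hZm ▸ hm)
  refine ⟨A, Finset.mem_powerset.1 hA, (hZf z hz).2 ▸ hft z (hZf z hz).1, Z,
    fun z hz => (hZf z hz).1, hZm, fun a ha z hz => ?_⟩
  exact (hf z (hZf z hz).1 a ((hZf z hz).2.symm ▸ ha)).symm

lemma mul_card_le_card_filter_le_degIn {ε : ℝ} (hε : 0 ≤ ε)
    (h : ε * #X ^ 2 ≤ ∑ v ∈ X, (degIn G X v : ℝ)) (hX : X.Nonempty) :
    ε / 2 * #X ≤ #{v ∈ X | ε / 2 * #X ≤ (degIn G X v : ℝ)} := by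
  have hXpos : (0 : ℝ) < #X := by exact_mod_cast hX.card_pos
  have hsum := sum_le_card_filter_mul_add X (fun v => ε / 2 * #X ≤ (degIn G X v : ℝ))
    (f := fun v => (degIn G X v : ℝ)) (a := #X) (b := ε / 2 * #X)
    (fun v _ _ => by
      have : (degIn G X v : ℝ) ≤ #X := by exact_mod_cast degIn_le_card G X v
      have : 0 ≤ ε / 2 * #X := by positivity
      linarith)
    (fun v _ hv => (not_le.1 hv).le)
  refine le_of_mul_le_mul_right ?_ hXpos
  linarith [show #X * (ε / 2 * (#X : ℝ)) = ε * #X ^ 2 / 2 by ring,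
    show ε / 2 * #X * (#X : ℝ) = ε * #X ^ 2 / 2 by ring]

lemma mul_card_le_card_filter_le_degIn_of_subset {R : Finset V} {d : ℝ}
    (hR : ∀ v ∈ R, d ≤ degIn G X v) :
    #R * d ≤ #{v ∈ X | t ≤ degIn G R v} * (#R : ℝ) + #X * t := by
  calc #R * d ≤ ∑ v ∈ R, (degIn G X v : ℝ) := by
        rw [← nsmul_eq_mul]; exact Finset.card_nsmul_le_sum _ _ _ hR
    _ = ∑ v ∈ X, (degIn G R v : ℝ) := by exact_mod_cast sum_degIn_comm G R X
    _ ≤ #{v ∈ X | t ≤ degIn G R v} * (#R : ℝ) + #X * t := by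
        refine sum_le_card_filter_mul_add X _ (fun v _ _ => ?_) fun v _ hv => ?_
        · exact_mod_cast (degIn_le_card G R v).trans (Nat.le_add_right _ _)
        · exact_mod_cast (not_le.1 hv).le

/-- The Kővári–Sós–Turán theorem in its qualitative form. -/
theorem exists_isBiclique_of_le_sum_degIn {ε : ℝ} (hε : 0 < ε) (ht : 0 < t) :
    ∃ N : ℕ, ∀ {V : Type u} (G : SimpleGraph V) (X : Finset V), N ≤ #X →
      ε * #X ^ 2 ≤ ∑ v ∈ X, (degIn G X v : ℝ) → ∃ A ⊆ X, ∃ B ⊆ X, IsBiclique G t A B := by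
  obtain ⟨r, hr⟩ := exists_nat_gt (4 * t / ε)
  obtain ⟨N, hN⟩ := exists_nat_gt ((r + 2 ^ r * t) * (4 / ε))
  refine ⟨N, fun {V} G X hNX hX => ?_⟩
  have hrpos : (0 : ℝ) < r := lt_of_le_of_lt (by positivity) hr
  have hNX' : (N : ℝ) ≤ #X := by exact_mod_cast hNX
  have hXpos : (0 : ℝ) < #X := lt_of_le_of_lt (by positivity) (hN.trans_le hNX')
  have hlarge : r + 2 ^ r * t ≤ ε / 4 * #X :=
    (div_le_iff₀' (by positivity)).1 (by rw [div_eq_mul_inv, inv_div]; linarith)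
  obtain ⟨R, hR, hRr⟩ := Finset.exists_subset_card_eq
    (s := {v ∈ X | ε / 2 * #X ≤ (degIn G X v : ℝ)}) (n := r) (by
      have := mul_card_le_card_filter_le_degIn hε.le hX
        (Finset.card_pos.1 (by exact_mod_cast hXpos))
      have : (0 : ℝ) ≤ 2 ^ r * t := by positivity
      rify
      linarith [mul_pos hε hXpos])
  have hY := mul_card_le_card_filter_le_degIn_of_subset (t := t)
    fun v hv => (Finset.mem_filter.1 (hR hv)).2
  rw [hRr] at hY
  have hYcard : (2 ^ r * t : ℝ) ≤ #{v ∈ X | t ≤ degIn G R v} := by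
    rw [div_lt_iff₀ hε] at hr
    have hXt : (#X : ℝ) * t ≤ r * (ε / 4 * #X) := by nlinarith
    refine le_of_mul_le_mul_left (a := (r : ℝ)) ?_ hrpos
    nlinarith
  obtain ⟨A, hA, hAt, B, hB, hBt, hAB⟩ := exists_isCompleteBetween_of_le_degIn
    (fun y hy => (Finset.mem_filter.1 hy).2) (by rw [hRr]; exact_mod_cast hYcard) ht
  exact ⟨A, hA.trans (hR.trans (Finset.filter_subset _ _)), B, hB.trans (Finset.filter_subset _ _),
    hAt, hBt, hAB⟩

end Bicliques

section DenseTiling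

variable {V : Type*} {G : SimpleGraph V} {t Q : ℕ} {A B L S X Y : Finset V} {g : ℝ}

lemma IsBiclique.sum_degIn_le {m : ℕ} (h : IsBiclique G m A B) (t : ℕ) (L : Finset V) :
    ∑ v ∈ L, (degIn G (A ∪ B) v : ℝ) ≤
      #{v ∈ L | t ≤ degIn G A v ∧ t ≤ degIn G B v} * (m : ℝ) + #L * (m + t) := by
  refine sum_le_card_filter_mul_add L _ (fun v _ _ => ?_) fun v _ hv => ?_
  all_goals
    have hA : degIn G A v ≤ m := h.card_left ▸ degIn_le_card G A v
    have hB : degIn G B v ≤ m := h.card_right ▸ degIn_le_card G B v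
    rw [degIn_union G h.disjoint]
    norm_cast
    omega

lemma exists_isBiclique_pair {m : ℕ} (hA : ∀ y ∈ Y, t ≤ degIn G A y)
    (hB : ∀ y ∈ Y, t ≤ degIn G B y) (hcard : 2 ^ #A * (2 ^ #B * m) ≤ #Y) (hm : 0 < m) :
    ∃ A' ⊆ A, #A' = t ∧ ∃ B' ⊆ B, #B' = t ∧ ∃ Z ⊆ Y, #Z = m ∧
      G.IsCompleteBetween (A' : Set V) (Z : Set V) ∧
      G.IsCompleteBetween (B' : Set V) (Z : Set V) := by
  obtain ⟨A', hA', hA't, Y', hY', hY'card, hAY⟩ :=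
    exists_isCompleteBetween_of_le_degIn hA hcard (by positivity)
  obtain ⟨B', hB', hB't, Z, hZ, hZm, hBZ⟩ :=
    exists_isCompleteBetween_of_le_degIn (fun y hy => hB y (hY' hy)) hY'card.ge hm
  exact ⟨A', hA', hA't, B', hB', hB't, Z, hZ.trans hY', hZm,
    fun a ha z hz => hAY ha (hZ hz), hBZ⟩

/-- Both `A'` and `B'` are matched with one half of `Z` instead of with each other. -/
lemma IsBiclique.isTiled_union_of_pair {A' B' Z : Finset V} (hQ : 0 < Q)
    (h : IsBiclique G (Q * t) A B) (hA' : A' ⊆ A) (hA't : #A' = t) (hB' : B' ⊆ B) (hB't : #B' = t)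
    (hZ : #Z = 2 * t) (hZAB : Disjoint (A ∪ B) Z)
    (hAZ : G.IsCompleteBetween (A' : Set V) (Z : Set V))
    (hBZ : G.IsCompleteBetween (B' : Set V) (Z : Set V)) : IsTiled G t (A ∪ B ∪ Z) := by
  obtain ⟨q, rfl⟩ : ∃ q, Q = q + 1 := Nat.exists_eq_add_one.2 hQ
  obtain ⟨Z', hZ', hZ't⟩ := Finset.exists_subset_card_eq (s := Z) (n := t) (by omega)
  have hrest : IsTiled G t (A \ A' ∪ B \ B') :=
    (IsBiclique.sdiff (by rwa [← add_one_mul]) hA' hB' hA't hB't).isTiled_of_mul q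
  have hAZ' : IsBiclique G t A' Z' := ⟨hA't, hZ't, fun a ha z hz => hAZ ha (hZ' hz)⟩
  have hBZ' : IsBiclique G t B' (Z \ Z') :=
    ⟨hB't, by rw [Finset.card_sdiff_of_subset hZ']; omega,
      fun b hb z hz => hBZ hb (Finset.mem_sdiff.1 hz).1⟩
  have hAB := Finset.disjoint_left.1 h.disjoint
  have hABZ := Finset.disjoint_left.1 hZAB
  have hsplit : A ∪ B ∪ Z = (A \ A' ∪ B \ B') ∪ (A' ∪ Z') ∪ (B' ∪ Z \ Z') := by grind
  rw [hsplit]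
  exact (hrest.union_tile hAZ' (Finset.disjoint_left.2 fun x => by grind)).union_tile hBZ'
    (Finset.disjoint_left.2 fun x => by grind)

lemma IsBiclique.exists_isTiled_union (h : IsBiclique G (Q * t) A B) (ht : 0 < t) (hQ : 0 < Q)
    (hL : Disjoint (A ∪ B) L)
    (hlarge : 2 ^ (Q * t) * (2 ^ (Q * t) * (2 * t)) + #(L ∩ X) ≤ (2 * g - 1 / Q) * #L)
    (hdense : (1 / 2 + g) * (2 * (Q * t)) * #L < ∑ v ∈ L, (degIn G (A ∪ B) v : ℝ)) :
    ∃ Z ⊆ L \ X, #Z = 2 * t ∧ IsTiled G t (A ∪ B ∪ Z) := by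
  set Y := {v ∈ L | t ≤ degIn G A v ∧ t ≤ degIn G B v} with hY
  have hQt : (0 : ℝ) < Q * t := by positivity
  have hYL : (2 * g - 1 / Q) * #L ≤ #Y := by
    have hsum := h.sum_degIn_le t L
    rw [← hY, Nat.cast_mul] at hsum
    refine le_of_mul_le_mul_right ?_ hQt
    have : (2 * g - 1 / Q) * #L * (Q * t) = 2 * g * #L * (Q * t) - #L * t := by field_simp
    linarith
  have hYX : 2 ^ (Q * t) * (2 ^ (Q * t) * (2 * t)) ≤ #(Y \ X) := by
    have hsub : Y ⊆ Y \ X ∪ L ∩ X := by grind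
    have hcard : (#Y : ℝ) ≤ #(Y \ X) + #(L ∩ X) := by
      exact_mod_cast (Finset.card_le_card hsub).trans (Finset.card_union_le _ _)
    rify
    linarith
  have hYmem : ∀ y ∈ Y \ X, t ≤ degIn G A y ∧ t ≤ degIn G B y := by grind
  obtain ⟨A', hA', hA't, B', hB', hB't, Z, hZ, hZt, hAZ, hBZ⟩ := exists_isBiclique_pair
    (fun y hy => (hYmem y hy).1) (fun y hy => (hYmem y hy).2)
    (by rwa [h.card_left, h.card_right]) (m := 2 * t) (by positivity)
  have hZL : Z ⊆ L \ X := hZ.trans (Finset.sdiff_subset_sdiff (Finset.filter_subset _ _) le_rfl)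
  exact ⟨Z, hZL, hZt, h.isTiled_union_of_pair hQ hA' hA't hB' hB't hZt
    (hL.mono_right (hZL.trans Finset.sdiff_subset)) hAZ hBZ⟩

lemma IsBiclique.exists_isTiled_union_of_sum_degIn_le (h : IsBiclique G (Q * t) A B) (ht : 0 < t)
    (hQ : 0 < Q) (hL : Disjoint (A ∪ B) L) (hg : 0 ≤ g)
    (hlarge : 2 ^ (Q * t) * (2 ^ (Q * t) * (2 * t)) + #(L ∩ X) ≤ (2 * g - 1 / Q) * #L) :
    ∃ Z ⊆ L \ X, #Z ≤ 2 * t ∧ IsTiled G t (A ∪ B ∪ Z) ∧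
      ∑ v ∈ L, (degIn G (A ∪ B) v : ℝ) ≤ (1 / 2 + g) * #(A ∪ B) * #L + Q * #Z * #L := by
  rw [h.card_union]
  by_cases hdense : (1 / 2 + g) * (2 * (Q * t)) * #L < ∑ v ∈ L, (degIn G (A ∪ B) v : ℝ)
  · obtain ⟨Z, hZ, hZt, hT⟩ := h.exists_isTiled_union ht hQ hL hlarge hdense
    refine ⟨Z, hZ, hZt.le, hT, ?_⟩
    have hsum : ∑ v ∈ L, degIn G (A ∪ B) v ≤ #L * (2 * (Q * t)) := by
      rw [← h.card_union]
      exact Finset.sum_le_card_nsmul _ _ _ fun v _ => degIn_le_card G _ v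
    have hnonneg : 0 ≤ (1 / 2 + g) * (2 * (Q * t)) * #L := by positivity
    rify at hsum
    rw [hZt]
    push_cast
    linarith
  · refine ⟨∅, Finset.empty_subset _, by simp, by simpa using h.isTiled_of_mul Q, ?_⟩
    simpa using hdense

/-- A tiling by copies of `K_{Qt,Qt}` can be refined and extended into a set `L` that sends more
than about half of all possible edges to it. -/
lemma IsTiled.exists_extension (hS : IsTiled G (Q * t) S) (ht : 0 < t) (hQ : 0 < Q)
    (hL : Disjoint S L) (hg : 0 ≤ g)
    (hlarge : 2 ^ (Q * t) * (2 ^ (Q * t) * (2 * t)) + #S / Q ≤ (2 * g - 1 / Q) * #L) :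
    ∃ T, IsTiled G t T ∧ S ⊆ T ∧ T ⊆ S ∪ L ∧ Q * #T ≤ (Q + 1) * #S ∧
      ∑ v ∈ L, (degIn G S v : ℝ) ≤ (1 / 2 + g) * #S * #L + Q * (#T - #S) * #L := by
  induction hS with
  | empty => exact ⟨∅, .empty, by simp [degIn]⟩
  | @union_tile S A B _ hAB hd ih =>
    rw [Finset.disjoint_union_left] at hL
    have hcard := Finset.card_union_of_disjoint hd
    obtain ⟨T, hT, hST, hTL, hTcard, hTsum⟩ := ih hL.1 (le_trans (by gcongr; simp) hlarge)
    have hLT : (#(L ∩ T) : ℝ) ≤ #(S ∪ (A ∪ B)) / Q := by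
      have hdT : #S + #(L ∩ T) ≤ #T := by
        rw [← Finset.card_union_of_disjoint (hL.1.mono_right Finset.inter_subset_left)]
        exact Finset.card_le_card (Finset.union_subset hST Finset.inter_subset_right)
      rw [le_div_iff₀ (by positivity)]
      norm_cast
      nlinarith
    obtain ⟨Z, hZ, hZcard, hABZ, hsum⟩ := hAB.exists_isTiled_union_of_sum_degIn_le ht hQ hL.2 hg
      (X := T) (by linarith)
    have hZL := Finset.disjoint_left.1 (hL.2.mono_right (hZ.trans Finset.sdiff_subset))
    have hdT : Disjoint T (A ∪ B ∪ Z) := by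
      have hdS := Finset.disjoint_left.1 hd
      have hdL := Finset.disjoint_left.1 hL.2
      exact Finset.disjoint_left.2 fun x => by grind
    have hcardT : #(T ∪ (A ∪ B ∪ Z)) = #T + #(A ∪ B) + #Z := by
      rw [Finset.card_union_of_disjoint hdT,
        Finset.card_union_of_disjoint (Finset.disjoint_left.2 hZL), add_assoc]
    refine ⟨T ∪ (A ∪ B ∪ Z), hT.union hABZ hdT, by grind, by grind, ?_, ?_⟩
    · rw [hcardT, hcard, hAB.card_union]
      nlinarith
    · simp_rw [degIn_union G hd, hcardT, hcard, Nat.cast_add, Finset.sum_add_distrib]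
      linarith

lemma exists_isTiled_sum_degIn_sdiff_le {ε : ℝ} (hε : 0 < ε) (ht : 0 < t) :
    ∃ N : ℕ, ∀ {V : Type u} (G : SimpleGraph V) (X : Finset V), ∃ S ⊆ X, IsTiled G t S ∧
      (N ≤ #(X \ S) → ∑ v ∈ X \ S, (degIn G (X \ S) v : ℝ) ≤ ε * #(X \ S) ^ 2) := by
  obtain ⟨N, hN⟩ := exists_isBiclique_of_le_sum_degIn.{u} hε ht
  refine ⟨N, fun {V} G X => ?_⟩
  obtain ⟨S, hSX, hS, hmax⟩ := exists_maximal_isTiled G ht X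
  refine ⟨S, hSX, hS, fun hcard => ?_⟩
  by_contra! hdense
  obtain ⟨A, hA, B, hB, hAB⟩ := hN G (X \ S) hcard hdense.le
  exact hmax A hA B hB hAB

lemma card_mul_le_sum_degIn {d : ℝ} (hd : ∀ v ∈ L, d ≤ degIn G (S ∪ (X ∪ L)) v)
    (hS : Disjoint S (X ∪ L)) (hX : Disjoint X L) :
    #L * d ≤ ∑ v ∈ L, (degIn G S v : ℝ) + #L * #X + ∑ v ∈ L, (degIn G L v : ℝ) := by
  have hXsum : ∑ v ∈ L, degIn G X v ≤ #L * #X :=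
    Finset.sum_le_card_nsmul _ _ _ fun v _ => degIn_le_card G X v
  have hsum := Finset.card_nsmul_le_sum L _ d hd
  simp only [degIn_union G hS, degIn_union G hX, Nat.cast_add, Finset.sum_add_distrib,
    nsmul_eq_mul] at hsum
  rify at hXsum
  linarith

/-- The subgraph of `G` induced on `U` has between `(1 + γ) n` and `C n` vertices and minimum degree
at least `(1 + γ) n / 2`. -/
structure IsHalfDense (G : SimpleGraph V) (γ C : ℝ) (n : ℕ) (U : Finset V) : Prop where
  card_le : (#U : ℝ) ≤ C * n
  le_card : (1 + γ) * n ≤ #U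
  le_degIn : ∀ v ∈ U, (1 + γ) * n / 2 ≤ (degIn G U v : ℝ)

section Enlarge

variable {γ C : ℝ} {n : ℕ}

lemma one_div_le_of_div_sq_le (hγ : 0 < γ) (hQ : 1000 / γ ^ 2 ≤ Q) :
    1 / (Q : ℝ) ≤ γ ^ 2 / 1000 := by
  simpa using one_div_le_one_div_of_le (by positivity) hQ

lemma div_sixteen_mul_le (hγ : 0 < γ) (hγ1 : γ ≤ 1) (hQ : 1000 / γ ^ 2 ≤ Q) :
    γ / (16 * Q) ≤ γ / 16000 := by
  have hγ2 : γ ^ 2 ≤ 1 := pow_le_one₀ hγ.le hγ1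
  calc γ / (16 * Q) = γ / 16 * (1 / Q) := by field_simp
    _ ≤ γ / 16 * (1 / 1000) := by gcongr γ / 16 * ?_; linarith [one_div_le_of_div_sq_le hγ hQ]
    _ = γ / 16000 := by ring

lemma IsTiled.exists_card_add_le (hS : IsTiled G (Q * t) S) (ht : 0 < t) (hγ : 0 < γ) (hγ1 : γ ≤ 1)
    (hQ : 1000 / γ ^ 2 ≤ Q) (hd : Disjoint S (X ∪ L)) (hXL : Disjoint X L)
    (hn : (2 ^ (Q * t) * (2 ^ (Q * t) * (2 * t)) : ℝ) * 100 / γ ^ 2 ≤ n)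
    (hdeg : ∀ v ∈ L, (1 + γ) * n / 2 ≤ (degIn G (S ∪ (X ∪ L)) v : ℝ))
    (hScard : (#S : ℝ) < (1 + γ / 2) * n) (hXcard : (#X : ℝ) < γ / (16 * Q) * n)
    (hLcard : γ / 4 * n ≤ #L)
    (hLsparse : ∑ v ∈ L, (degIn G L v : ℝ) ≤ γ / 16 * n * #L) :
    ∃ T ⊆ S ∪ L, IsTiled G t T ∧ #S + γ / (16 * Q) * n ≤ #T := by
  have hQpos : (0 : ℝ) < Q := lt_of_lt_of_le (by positivity) hQ
  have hQinv := one_div_le_of_div_sq_le hγ hQ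
  have hnpos : (0 : ℝ) < n := lt_of_lt_of_le (by positivity) hn
  have hLpos : (0 : ℝ) < #L := lt_of_lt_of_le (by positivity) hLcard
  have hγ2 : γ ^ 2 ≤ γ := pow_le_of_le_one hγ.le hγ1 two_ne_zero
  have hδ := div_sixteen_mul_le hγ hγ1 hQ
  have hlarge : 2 ^ (Q * t) * (2 ^ (Q * t) * (2 * t)) + #S / Q ≤
      (2 * (γ / 16) - 1 / (Q : ℝ)) * #L := by
    have hS : (#S : ℝ) / Q ≤ 3 / 2 * n * (γ ^ 2 / 1000) := by
      rw [div_eq_mul_one_div]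
      gcongr
      nlinarith
    have hL : (γ / 16 - γ / 1000) * (γ / 4 * n) ≤ (2 * (γ / 16) - 1 / (Q : ℝ)) * #L :=
      mul_le_mul (by linarith) hLcard (by positivity) (by linarith)
    rw [div_le_iff₀ (by positivity)] at hn
    nlinarith [mul_pos (pow_pos hγ 2) hnpos]
  obtain ⟨T, hT, -, hTL, -, hsum⟩ := hS.exists_extension ht (by exact_mod_cast hQpos)
    (Finset.disjoint_union_right.1 hd).2 (g := γ / 16) (by positivity) hlarge
  refine ⟨T, hTL, hT, ?_⟩
  have hcount := card_mul_le_sum_degIn hdeg hd hXL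
  have hgain : (1 + γ) * n / 2 ≤
      (1 / 2 + γ / 16) * #S + Q * (#T - #S) + #X + γ / 16 * n :=
    le_of_mul_le_mul_left (by linarith) hLpos
  have hSn : (1 / 2 + γ / 16) * (#S : ℝ) ≤ (1 / 2 + γ / 16) * ((1 + γ / 2) * n) := by gcongr
  have hδn : γ / (16 * Q) * n ≤ γ / 16000 * n := by gcongr
  have hγn : γ ^ 2 * n ≤ γ * n := by gcongr
  have : γ / (16 * Q) * n * Q ≤ #T * Q - #S * Q := by
    rw [show γ / (16 * Q) * n * Q = γ / 16 * n by field_simp]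
    linarith
  linarith [le_of_mul_le_mul_right (this.trans_eq (sub_mul _ _ _).symm) hQpos]

lemma exists_isTiled_card_add_le (hγ : 0 < γ) (hγ1 : γ ≤ 1) (hC : 0 < C) (hQ : 1000 / γ ^ 2 ≤ Q)
    (ht : 0 < t) :
    ∃ M : ℕ, ∀ n ≥ M, ∀ {V : Type u} {G : SimpleGraph V} {U S : Finset V}, IsHalfDense G γ C n U →
      S ⊆ U → IsTiled G (Q * t) S → #S < (1 + γ / 2) * n →
      ∃ T ⊆ U, IsTiled G t T ∧ #S + γ / (16 * Q) * n ≤ #T := by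
  obtain ⟨N, hN⟩ := exists_isTiled_sum_degIn_sdiff_le.{u} (ε := γ / (16 * C)) (by positivity) ht
  obtain ⟨M₁, hM₁⟩ := exists_nat_ge (N / (γ / 4))
  obtain ⟨M₂, hM₂⟩ := exists_nat_ge ((2 ^ (Q * t) * (2 ^ (Q * t) * (2 * t)) : ℝ) * 100 / γ ^ 2)
  refine ⟨max M₁ M₂, fun n hn V G U S hU hSU hS hScard => ?_⟩
  obtain ⟨X, hXU, hX, hsparse⟩ := hN G (U \ S)
  have hdSX : Disjoint S X := Finset.disjoint_sdiff.mono_right hXU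
  by_cases hXcard : γ / (16 * Q) * n ≤ #X
  · refine ⟨S ∪ X, Finset.union_subset hSU (hXU.trans Finset.sdiff_subset),
      (hS.of_mul Q).union hX hdSX, ?_⟩
    rw [Finset.card_union_of_disjoint hdSX, Nat.cast_add]
    linarith
  rw [not_le] at hXcard
  set L := (U \ S) \ X with hL
  have hXL : Disjoint X L := Finset.disjoint_sdiff
  have hUeq : S ∪ (X ∪ L) = U := by
    rw [hL, Finset.union_sdiff_of_subset hXU, Finset.union_sdiff_of_subset hSU]
  have hd : Disjoint S (X ∪ L) := by
    rw [hL, Finset.union_sdiff_of_subset hXU]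
    exact Finset.disjoint_sdiff
  have hn₁ : (M₁ : ℝ) ≤ n := by exact_mod_cast (le_max_left _ _).trans hn
  have hn₂ : (M₂ : ℝ) ≤ n := by exact_mod_cast (le_max_right _ _).trans hn
  have hUcard : (#U : ℝ) = #S + (#X + #L) := by
    rw [← hUeq, Finset.card_union_of_disjoint hd, Finset.card_union_of_disjoint hXL]
    push_cast
    rfl
  have hLcard : γ / 4 * n ≤ #L := by
    nlinarith [hU.le_card, div_sixteen_mul_le hγ hγ1 hQ]
  have hLN : N ≤ #L := by
    rw [div_le_iff₀' (by positivity)] at hM₁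
    rify
    nlinarith
  obtain ⟨T, hTL, hT, hTcard⟩ := hS.exists_card_add_le ht hγ hγ1 hQ hd hXL (hM₂.trans hn₂)
    (fun v hv => hUeq.symm ▸ hU.le_degIn v (hUeq ▸ by simp [hv])) hScard hXcard hLcard (by
      refine (hsparse hLN).trans ?_
      have hLC : (#L : ℝ) ≤ C * n := by linarith [hU.card_le]
      calc γ / (16 * C) * (#L : ℝ) ^ 2 = γ / (16 * C) * #L * #L := by ring
        _ ≤ γ / (16 * C) * (C * n) * #L := by gcongr
        _ = γ / 16 * n * #L := by field_simp)
  exact ⟨T, hTL.trans (by grind), hT, hTcard⟩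

lemma exists_isTiled_or_mul_le_card (hγ : 0 < γ) (hγ1 : γ ≤ 1) (hC : 0 < C)
    (hQ : 1000 / γ ^ 2 ≤ Q) (j : ℕ) (ht : 0 < t) :
    ∃ M : ℕ, ∀ n ≥ M, ∀ {V : Type u} {G : SimpleGraph V} {U : Finset V}, IsHalfDense G γ C n U →
      ∃ S ⊆ U, IsTiled G t S ∧
        ((1 + γ / 2) * n ≤ #S ∨ j * (γ / (16 * Q) * n) ≤ #S) := by
  have hQpos : 0 < Q := by exact_mod_cast lt_of_lt_of_le (by positivity : (0 : ℝ) < 1000 / γ ^ 2) hQ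
  induction j generalizing t with
  | zero => exact ⟨0, fun n _ V G U _ => ⟨∅, Finset.empty_subset _, .empty, .inr (by simp)⟩⟩
  | succ j ih =>
    obtain ⟨M₁, hM₁⟩ := ih (t := Q * t) (by positivity)
    obtain ⟨M₂, hM₂⟩ := exists_isTiled_card_add_le.{u} hγ hγ1 hC hQ ht
    refine ⟨max M₁ M₂, fun n hn V G U hU => ?_⟩
    obtain ⟨S, hSU, hS, hScard⟩ := hM₁ n ((le_max_left _ _).trans hn) hU
    by_cases hbig : (1 + γ / 2) * n ≤ #S
    · exact ⟨S, hSU, hS.of_mul Q, .inl hbig⟩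
    · obtain ⟨T, hTU, hT, hTcard⟩ :=
        hM₂ n ((le_max_right _ _).trans hn) hU hSU hS (not_le.1 hbig)
      refine ⟨T, hTU, hT, .inr ?_⟩
      have := hScard.resolve_left hbig
      push_cast
      linarith

/-- A tiling by copies of a much larger `K_{Qt,Qt}` gains a fixed proportion of `n` vertices when it
is turned into a tiling by copies of `K_{t,t}`, so boundedly many rounds suffice. -/
theorem exists_isTiled_of_isHalfDense (hγ : 0 < γ) (hγ1 : γ ≤ 1) (hC : 0 < C) (ht : 0 < t) :
    ∃ M : ℕ, ∀ n ≥ M, ∀ {V : Type u} {G : SimpleGraph V} {U : Finset V}, IsHalfDense G γ C n U →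
      ∃ S ⊆ U, IsTiled G t S ∧ (1 + γ / 2) * n ≤ #S := by
  obtain ⟨Q, hQ⟩ := exists_nat_ge (1000 / γ ^ 2)
  have hQpos : (0 : ℝ) < Q := lt_of_lt_of_le (by positivity) hQ
  obtain ⟨j, hj⟩ := exists_nat_ge ((1 + γ / 2) / (γ / (16 * Q)))
  obtain ⟨M, hM⟩ := exists_isTiled_or_mul_le_card.{u} hγ hγ1 hC hQ j ht
  refine ⟨M, fun n hn V G U hU => ?_⟩
  obtain ⟨S, hSU, hS, hScard⟩ := hM n hn hU
  refine ⟨S, hSU, hS, hScard.elim id fun h => ?_⟩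
  rw [div_le_iff₀ (by positivity)] at hj
  calc (1 + γ / 2) * n ≤ j * (γ / (16 * Q)) * n := by gcongr
    _ = j * (γ / (16 * Q) * n) := mul_assoc _ _ _
    _ ≤ #S := h

end Enlarge

end DenseTiling

section Packing

variable {α : Type*} {V : Type*} {H : SimpleGraph α} {G : SimpleGraph V} {s t : ℕ}
  {K K' P P' Q Q' : Finset α} {A B S S' : Finset V} {f f' : α → V}

/-- `P` and `Q` are the colour classes of a proper 2-colouring of a union of components of `H`. -/
structure IsBipartition (H : SimpleGraph α) (P Q : Finset α) : Prop where
  disjoint : Disjoint P Q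
  mem_right : ∀ ⦃u v⦄, H.Adj u v → u ∈ P → v ∈ Q
  mem_left : ∀ ⦃u v⦄, H.Adj u v → u ∈ Q → v ∈ P

namespace IsBipartition

lemma symm (h : IsBipartition H P Q) : IsBipartition H Q P :=
  ⟨h.disjoint.symm, h.mem_left, h.mem_right⟩

lemma union (h : IsBipartition H P Q) (h' : IsBipartition H P' Q')
    (hd : Disjoint (P ∪ Q) (P' ∪ Q')) : IsBipartition H (P ∪ P') (Q ∪ Q') where
  disjoint := by
    simp only [Finset.disjoint_union_left, Finset.disjoint_union_right] at hd ⊢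
    exact ⟨⟨h.disjoint, hd.1.2.symm⟩, hd.2.1, h'.disjoint⟩
  mem_right _ _ huv hu :=
    Finset.mem_union.2 <| (Finset.mem_union.1 hu).imp (h.mem_right huv) (h'.mem_right huv)
  mem_left _ _ huv hu :=
    Finset.mem_union.2 <| (Finset.mem_union.1 hu).imp (h.mem_left huv) (h'.mem_left huv)

lemma mem_union_of_adj (h : IsBipartition H P Q) {u v : α} (huv : H.Adj u v) (hu : u ∈ P ∪ Q) :
    v ∈ P ∪ Q :=
  (Finset.mem_union.1 hu).elim (fun hu => Finset.mem_union_right _ (h.mem_right huv hu))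
    fun hu => Finset.mem_union_left _ (h.mem_left huv hu)

end IsBipartition

lemma mem_of_reachable (hK : ∀ ⦃u v⦄, H.Adj u v → u ∈ K → v ∈ K) {u v : α}
    (huv : H.Reachable u v) (hu : u ∈ K) : v ∈ K := by
  obtain ⟨p⟩ := huv
  induction p with
  | nil => exact hu
  | cons h _ ih => exact ih (hK h hu)

lemma exists_isBipartition_component [Finite α] (hH : H.Colorable 2) (v : α) :
    ∃ P Q : Finset α, IsBipartition H P Q ∧
      ((P ∪ Q : Finset α) : Set α) = (H.connectedComponentMk v).supp := by
  obtain ⟨C⟩ := hH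
  have hfin := (H.connectedComponentMk v).supp.toFinite
  refine ⟨{w ∈ hfin.toFinset | C w = 0}, {w ∈ hfin.toFinset | ¬C w = 0},
    ⟨Finset.disjoint_filter_filter_not _ _ _, fun u w huw hu => ?_, fun u w huw hu => ?_⟩,
    by rw [Finset.filter_union_filter_not_eq, Set.Finite.coe_toFinset]⟩
  all_goals
    have hC := C.valid huw
    simp only [Finset.mem_filter, Set.Finite.mem_toFinset] at hu ⊢
    exact ⟨(ConnectedComponent.mem_supp_congr_adj _ huw).1 hu.1, by omega⟩

/-- A bipartition inside `K` whose two sides differ in size by at most `s`. -/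
structure IsBalancedBipartition (H : SimpleGraph α) (s : ℕ) (K P Q : Finset α) : Prop extends
    IsBipartition H P Q where
  subset : P ∪ Q ⊆ K
  card_left_le : #P ≤ #Q + s
  card_right_le : #Q ≤ #P + s

namespace IsBalancedBipartition

lemma symm (h : IsBalancedBipartition H s K P Q) : IsBalancedBipartition H s K Q P where
  toIsBipartition := h.toIsBipartition.symm
  subset := Finset.union_comm P Q ▸ h.subset
  card_left_le := h.card_right_le
  card_right_le := h.card_left_le

lemma exists_card_lt [Finite α] (h : IsBalancedBipartition H s K P Q) (hH : H.Colorable 2)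
    (hs : ∀ v, (H.connectedComponentMk v).supp.ncard ≤ s)
    (hK : ∀ ⦃u v⦄, H.Adj u v → u ∈ K → v ∈ K) (hne : P ∪ Q ≠ K) :
    ∃ P' Q', IsBalancedBipartition H s K P' Q' ∧ #P + #Q < #P' + #Q' ∧
      #P' ≤ #P + s ∧ #Q' ≤ #Q + s := by
  wlog hPQ : #P ≤ #Q generalizing P Q
  · obtain ⟨P', Q', h', hlt, hP', hQ'⟩ :=
      this h.symm (Finset.union_comm P Q ▸ hne) (le_of_not_ge hPQ)
    exact ⟨Q', P', h'.symm, by omega, hQ', hP'⟩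
  obtain ⟨v, hvK, hv⟩ := Finset.exists_of_ssubset (h.subset.ssubset_of_ne hne)
  obtain ⟨P₀, Q₀, h₀, hsupp⟩ := exists_isBipartition_component hH v
  wlog hle : #Q₀ ≤ #P₀ generalizing P₀ Q₀
  · exact this Q₀ P₀ h₀.symm (Finset.union_comm P₀ Q₀ ▸ hsupp) (le_of_not_ge hle)
  have hmem : ∀ w, w ∈ P₀ ∪ Q₀ ↔ H.Reachable w v := fun w => by
    rw [← Finset.mem_coe, hsupp, ConnectedComponent.mem_supp_iff, ConnectedComponent.eq]
  have hd : Disjoint (P ∪ Q) (P₀ ∪ Q₀) := Finset.disjoint_left.2 fun w hw hw₀ =>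
    hv <| mem_of_reachable (fun _ _ => h.mem_union_of_adj) ((hmem w).1 hw₀) hw
  have hsub : P₀ ∪ Q₀ ⊆ K := fun w hw => mem_of_reachable hK ((hmem w).1 hw).symm hvK
  have hpos : 0 < #(P₀ ∪ Q₀) := Finset.card_pos.2 ⟨v, (hmem v).2 (Reachable.refl v)⟩
  have hcard : #(P₀ ∪ Q₀) ≤ s := by rw [← Set.ncard_coe_finset, hsupp]; exact hs v
  rw [Finset.card_union_of_disjoint h₀.disjoint] at hpos hcard
  have hPQ' := h.card_right_le
  simp only [Finset.disjoint_union_left, Finset.disjoint_union_right] at hd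
  have hP' : #(P ∪ P₀) = #P + #P₀ := Finset.card_union_of_disjoint hd.1.1
  have hQ' : #(Q ∪ Q₀) = #Q + #Q₀ := Finset.card_union_of_disjoint hd.2.2
  refine ⟨P ∪ P₀, Q ∪ Q₀, ⟨h.union h₀ ?_, ?_, by omega, by omega⟩, by omega, by omega, by omega⟩
  · simpa only [Finset.disjoint_union_left, Finset.disjoint_union_right] using hd
  · rw [Finset.union_union_union_comm]
    exact Finset.union_subset h.subset hsub

end IsBalancedBipartition

lemma exists_isBipartition_card_le [Finite α] (hH : H.Colorable 2)
    (hs : ∀ v, (H.connectedComponentMk v).supp.ncard ≤ s)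
    (hK : ∀ ⦃u v⦄, H.Adj u v → u ∈ K → v ∈ K) (t : ℕ) :
    ∃ P Q, IsBipartition H P Q ∧ P ∪ Q ⊆ K ∧ #P ≤ t ∧ #Q ≤ t ∧
      (P ∪ Q = K ∨ 2 * t ≤ #(P ∪ Q) + 3 * s) := by
  have hempty : IsBalancedBipartition H s K ∅ ∅ :=
    ⟨⟨by simp, by simp, by simp⟩, by simp, by simp, by simp⟩
  obtain ⟨⟨P, Q⟩, hPQ, hmax⟩ := Finset.exists_max_image
    {p ∈ K.powerset ×ˢ K.powerset | IsBalancedBipartition H s K p.1 p.2 ∧ #p.1 ≤ t ∧ #p.2 ≤ t}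
    (fun p => #p.1 + #p.2) ⟨(∅, ∅), by simp [hempty]⟩
  obtain ⟨-, h, hP, hQ⟩ := Finset.mem_filter.1 hPQ
  refine ⟨P, Q, h.toIsBipartition, h.subset, hP, hQ, or_iff_not_imp_left.2 fun hne => ?_⟩
  obtain ⟨P', Q', h', hlt, hP', hQ'⟩ := h.exists_card_lt hH hs hK hne
  have hfull : ¬(#P' ≤ t ∧ #Q' ≤ t) := fun ht => hlt.not_ge <| hmax (P', Q') <| by
    simp [h', ht, Finset.union_subset_iff.1 h'.subset]
  have hleft := h.card_left_le
  have hright := h.card_right_le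
  rw [Finset.card_union_of_disjoint h.disjoint]
  omega

/-- `f` embeds the subgraph of `H` induced on `K`, a union of components of `H`, into `G[S]`. -/
structure IsPartialEmbedding (H : SimpleGraph α) (G : SimpleGraph V) (K : Finset α) (S : Finset V)
    (f : α → V) : Prop where
  mem_of_adj : ∀ ⦃u v⦄, H.Adj u v → u ∈ K → v ∈ K
  mapsTo : Set.MapsTo f K S
  injOn : Set.InjOn f K
  map_adj : ∀ ⦃u v⦄, H.Adj u v → u ∈ K → G.Adj (f u) (f v)

lemma IsPartialEmbedding.union (h : IsPartialEmbedding H G K S f)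
    (h' : IsPartialEmbedding H G K' S' f') (hK : Disjoint K K') (hS : Disjoint S S') :
    IsPartialEmbedding H G (K ∪ K') (S ∪ S') (K.piecewise f f') := by
  have hf : ∀ x ∈ K, K.piecewise f f' x = f x := fun x => K.piecewise_eq_of_mem f f'
  have hf' : ∀ x ∈ K', K.piecewise f f' x = f' x := fun x hx =>
    K.piecewise_eq_of_notMem f f' (Finset.disjoint_right.1 hK hx)
  refine ⟨fun u v huv hu => Finset.mem_union.2 <|
    (Finset.mem_union.1 hu).imp (h.mem_of_adj huv) (h'.mem_of_adj huv), ?_, ?_, ?_⟩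
  · push_cast
    exact (h.mapsTo.congr fun x hx => (hf x hx).symm).union_union
      (h'.mapsTo.congr fun x hx => (hf' x hx).symm)
  · push_cast
    refine (Set.injOn_union (Finset.disjoint_coe.2 hK)).2
      ⟨h.injOn.congr fun x hx => (hf x hx).symm, h'.injOn.congr fun x hx => (hf' x hx).symm, ?_⟩
    intro x hx y hy
    rw [hf x hx, hf' y hy]
    exact fun hxy => Finset.disjoint_left.1 hS (h.mapsTo hx) (hxy ▸ h'.mapsTo hy)
  · intro u v huv hu
    rcases Finset.mem_union.1 hu with hu | hu
    · rw [hf u hu, hf v (h.mem_of_adj huv hu)]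
      exact h.map_adj huv hu
    · rw [hf' u hu, hf' v (h'.mem_of_adj huv hu)]
      exact h'.map_adj huv hu

lemma exists_mapsTo_injOn_of_card_le [Nonempty V] (h : #P ≤ #A) :
    ∃ f : α → V, Set.MapsTo f P A ∧ Set.InjOn f P := by
  obtain ⟨f, hf, hinj⟩ := P.finite_toSet.exists_injOn_of_encard_le (t := (A : Set V)) (by simpa)
  exact ⟨f, hf, hinj⟩

lemma IsBipartition.exists_isPartialEmbedding [Nonempty V] (h : IsBipartition H P Q)
    (hAB : IsBiclique G t A B) (hP : #P ≤ t) (hQ : #Q ≤ t) :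
    ∃ f, IsPartialEmbedding H G (P ∪ Q) (A ∪ B) f := by
  obtain ⟨f, hf, hfinj⟩ := exists_mapsTo_injOn_of_card_le (hP.trans_eq hAB.card_left.symm)
  obtain ⟨g, hg, hginj⟩ := exists_mapsTo_injOn_of_card_le (hQ.trans_eq hAB.card_right.symm)
  have hfP : ∀ x ∈ P, P.piecewise f g x = f x := fun x => P.piecewise_eq_of_mem f g
  have hgQ : ∀ x ∈ Q, P.piecewise f g x = g x := fun x hx =>
    P.piecewise_eq_of_notMem f g (Finset.disjoint_right.1 h.disjoint hx)
  refine ⟨P.piecewise f g, fun _ _ => h.mem_union_of_adj, ?_, ?_, ?_⟩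
  · push_cast
    exact (hf.congr fun x hx => (hfP x hx).symm).union_union (hg.congr fun x hx => (hgQ x hx).symm)
  · push_cast
    refine (Set.injOn_union (Finset.disjoint_coe.2 h.disjoint)).2
      ⟨hfinj.congr fun x hx => (hfP x hx).symm, hginj.congr fun x hx => (hgQ x hx).symm, ?_⟩
    intro x hx y hy
    rw [hfP x hx, hgQ y hy]
    exact fun hxy => Finset.disjoint_left.1 hAB.disjoint (hf hx) (hxy ▸ hg hy)
  · intro u v huv hu
    rcases Finset.mem_union.1 hu with hu | hu
    · rw [hfP u hu, hgQ v (h.mem_right huv hu)]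
      exact hAB.complete (hf hu) (hg (h.mem_right huv hu))
    · rw [hgQ u hu, hfP v (h.mem_left huv hu)]
      exact (hAB.complete (hf (h.mem_left huv hu)) (hg hu)).symm

lemma IsTiled.exists_isPartialEmbedding [Finite α] [Nonempty V] (hS : IsTiled G t S)
    (hH : H.Colorable 2) (hs : ∀ v, (H.connectedComponentMk v).supp.ncard ≤ s) :
    ∃ K f, IsPartialEmbedding H G K S f ∧
      ((∀ v, v ∈ K) ∨ 2 * t * #S ≤ 2 * t * #K + 3 * s * #S) := by
  cases nonempty_fintype α
  induction hS with
  | empty => exact ⟨∅, fun _ => Classical.arbitrary V, by constructor <;> simp, by simp⟩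
  | @union_tile S A B _ hAB hd ih =>
    obtain ⟨K, f, hf, hcard⟩ := ih
    obtain ⟨P, Q, hPQ, hsub, hP, hQ, hcard'⟩ := exists_isBipartition_card_le hH hs (K := Kᶜ)
      (fun u v huv => by simpa using mt (hf.mem_of_adj huv.symm)) t
    obtain ⟨g, hg⟩ := hPQ.exists_isPartialEmbedding hAB hP hQ
    have hK : Disjoint K (P ∪ Q) := (Finset.subset_compl_iff_disjoint_left).1 hsub
    refine ⟨K ∪ (P ∪ Q), _, hf.union hg hK hd, ?_⟩
    rcases hcard with hcard | hcard
    · exact Or.inl fun v => Finset.mem_union_left _ (hcard v)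
    rcases hcard' with hcard' | hcard'
    · simp [hcard']
    right
    rw [Finset.card_union_of_disjoint hd, Finset.card_union_of_disjoint hK, hAB.card_union]
    nlinarith

lemma IsTiled.exists_injective_hom [Fintype α] {γ : ℝ} (hS : IsTiled G t S)
    (hH : H.Colorable 2) (hs : ∀ v, (H.connectedComponentMk v).supp.ncard ≤ s) (hγ : 0 < γ)
    (hγ1 : γ ≤ 1) (ht : 12 * s ≤ γ * t) (ht0 : 0 < t) (hα : 0 < Fintype.card α)
    (hcard : (1 + γ / 2) * Fintype.card α ≤ #S) :
    ∃ f : H →g G, Function.Injective f ∧ ∀ x, f x ∈ S := by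
  have hS0 : (0 : ℝ) < #S := lt_of_lt_of_le (by positivity) hcard
  have : Nonempty V := (Finset.card_pos.1 (by exact_mod_cast hS0)).to_type
  obtain ⟨K, f, hf, hK | hK⟩ := hS.exists_isPartialEmbedding hH hs
  · exact ⟨⟨f, fun h => hf.map_adj h (hK _)⟩, fun x y h => hf.injOn (hK x) (hK y) h,
      fun x => hf.mapsTo (hK x)⟩
  exfalso
  have hKα : (#K : ℝ) ≤ Fintype.card α := by exact_mod_cast Finset.card_le_univ K
  have hK' : (2 * t * #S : ℝ) ≤ 2 * t * #K + 3 * s * #S := by exact_mod_cast hK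
  have hlt : (2 - γ / 4) * #S ≤ 2 * Fintype.card α := by
    refine le_of_mul_le_mul_left (a := (t : ℝ)) ?_ (by positivity)
    nlinarith
  have hgain : 0 < γ * Fintype.card α * (3 / 4 - γ / 8) :=
    mul_pos (by positivity) (by linarith)
  nlinarith

end Packing

section Minors

variable {α β V : Type*} {H : SimpleGraph α} {G J : SimpleGraph V}
  {X : Finset V} {u v : V}

lemma IsMinor.of_injective_hom {K : SimpleGraph β} (h : IsMinor H G) (f : K →g H)
    (hf : Function.Injective f) : IsMinor K G := by
  obtain ⟨μ, hdisj, hconn, hadj⟩ := h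
  exact ⟨μ ∘ f, fun x y hxy => hdisj _ _ (hf.ne hxy), fun x => hconn (f x),
    fun x y hxy => hadj _ _ (f.map_adj hxy)⟩

lemma isMinor_induce (G : SimpleGraph V) (X : Set V) : IsMinor (G.induce X) G := by
  refine ⟨fun x => {x.1}, fun x y hxy => by simpa [Subtype.ext_iff] using hxy, fun x => ?_,
    fun x y hxy => ⟨x, rfl, y, rfl, hxy⟩⟩
  rw [induce_singleton_eq_top]
  exact connected_top

/-- The graph obtained from `J` by joining `u` to all neighbours of `v`. Deleting `v` from it
amounts to contracting an edge `uv` of `J` onto `u`; keeping the vertex type (and `v` itself) lets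
successive contractions be tracked by a shrinking vertex set. -/
def absorb (J : SimpleGraph V) (u v : V) : SimpleGraph V :=
  J ⊔ SimpleGraph.fromRel fun x y => x = u ∧ J.Adj v y

lemma absorb_adj {x y : V} : (absorb J u v).Adj x y ↔
    J.Adj x y ∨ x ≠ y ∧ (x = u ∧ J.Adj v y ∨ y = u ∧ J.Adj v x) := by
  simp only [absorb, sup_adj, fromRel_adj]

lemma absorb_adj_of_ne {x y : V} (hx : x ≠ u) (hy : y ≠ u) :
    (absorb J u v).Adj x y ↔ J.Adj x y := by
  simp only [absorb_adj, hx, hy, false_and, or_self, and_false, or_false]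

lemma IsMinor.induce_compl_absorb {H : SimpleGraph α} {u v : α} (h : IsMinor H G)
    (huv : H.Adj u v) : IsMinor ((absorb H u v).induce {v}ᶜ) G := by
  obtain ⟨μ, hdisj, hconn, hadj⟩ := h
  set μ' : α → Set V := Function.update μ u (μ u ∪ μ v)
  have hμ'u : μ' u = μ u ∪ μ v := Function.update_self ..
  have hμ' : ∀ x ≠ u, μ' x = μ x := fun x hx => Function.update_of_ne hx ..
  have hsub : ∀ x, μ x ⊆ μ' x := fun x => by
    obtain rfl | hx := eq_or_ne x u
    · exact hμ'u ▸ Set.subset_union_left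
    · exact (hμ' x hx).ge
  have hsub_u : μ v ⊆ μ' u := hμ'u ▸ Set.subset_union_right
  have hdisj_u : ∀ x ≠ u, x ≠ v → Disjoint (μ' u) (μ' x) := fun x hxu hxv => by
    rw [hμ'u, hμ' x hxu, Set.disjoint_union_left]
    exact ⟨hdisj u x hxu.symm, hdisj v x hxv.symm⟩
  refine ⟨fun x => μ' x, fun ⟨x, hx⟩ ⟨y, hy⟩ hxy => ?_, fun ⟨x, hx⟩ => ?_, ?_⟩
  · have hne : x ≠ y := fun h => hxy (Subtype.ext h)
    obtain rfl | hxu := eq_or_ne x u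
    · exact hdisj_u y hne.symm hy
    obtain rfl | hyu := eq_or_ne y u
    · exact (hdisj_u x hne hx).symm
    · simpa only [hμ' x hxu, hμ' y hyu] using hdisj x y hne
  · change (G.induce (μ' x)).Connected
    obtain rfl | hxu := eq_or_ne x u
    · obtain ⟨a, ha, b, hb, hab⟩ := hadj x v huv
      rw [hμ'u]
      exact connected_induce_union (hconn x).preconnected (hconn v).preconnected ha hb hab
    · rw [hμ' x hxu]
      exact hconn x
  · rintro ⟨x, hx⟩ ⟨y, hy⟩ hxy
    obtain h | ⟨-, ⟨rfl, h⟩ | ⟨rfl, h⟩⟩ := absorb_adj.1 hxy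
    · obtain ⟨a, ha, b, hb, hab⟩ := hadj x y h
      exact ⟨a, hsub x ha, b, hsub y hb, hab⟩
    · obtain ⟨a, ha, b, hb, hab⟩ := hadj v y h
      exact ⟨a, hsub_u ha, b, hsub y hb, hab⟩
    · obtain ⟨a, ha, b, hb, hab⟩ := hadj v x h
      exact ⟨b, hsub x hb, a, hsub_u ha, hab.symm⟩

lemma IsMinor.induce_mono {X Y : Finset V} {W : Type*} {G : SimpleGraph W}
    (h : IsMinor (J.induce (Y : Set V)) G) (hXY : X ⊆ Y) : IsMinor (J.induce (X : Set V)) G :=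
  h.of_injective_hom (SimpleGraph.induceHomOfLE J (Finset.coe_subset.2 hXY)).toHom
    (SimpleGraph.induceHomOfLE J (Finset.coe_subset.2 hXY)).injective

lemma IsMinor.induce_erase_absorb {W : Type*} {G : SimpleGraph W}
    (h : IsMinor (J.induce (X : Set V)) G) (hu : u ∈ X) (hv : v ∈ X) (huv : J.Adj u v) :
    IsMinor ((absorb J u v).induce (X.erase v : Set V)) G := by
  refine (h.induce_compl_absorb (u := ⟨u, hu⟩) (v := ⟨v, hv⟩) (induce_adj.2 huv)).of_injective_hom
    ⟨fun x => ⟨⟨x, Finset.mem_of_mem_erase x.2⟩, fun hx => ?_⟩, fun {x y} hxy => ?_⟩ ?_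
  · exact Finset.ne_of_mem_erase x.2 (congrArg Subtype.val hx)
  · simpa only [induce_adj, comap_adj, Function.Embedding.subtype_apply, absorb_adj, ne_eq,
      Subtype.mk.injEq, SetCoe.ext_iff] using hxy
  · exact fun x y hxy => Subtype.ext (by simpa using hxy)

lemma degIn_erase_self (G : SimpleGraph V) (X : Finset V) (v : V) :
    degIn G (X.erase v) v = degIn G X v := by
  rw [degIn, Finset.filter_erase, Finset.erase_eq_of_notMem (by simp), degIn]

lemma sum_degIn_erase (G : SimpleGraph V) (hv : v ∈ X) :
    ∑ w ∈ X, degIn G X w =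
      ∑ w ∈ X.erase v, degIn G (X.erase v) w + 2 * degIn G X v := by
  rw [← Finset.sum_erase_add _ _ hv, sum_degIn_comm, ← Finset.sum_erase_add _ _ hv,
    degIn_erase_self]
  ring

lemma degIn_add_degIn_le_absorb (J : SimpleGraph V) (X : Finset V) (u v : V) :
    degIn J (X.erase v) u + degIn J X v ≤
      degIn (absorb J u v) (X.erase v) u + degIn J {w ∈ X | J.Adj u w} v + 1 := by
  have hunion : {w ∈ X.erase v | J.Adj u w} ∪ {w ∈ X | J.Adj v w} ⊆
      insert u {w ∈ X.erase v | (absorb J u v).Adj u w} := fun w hw => by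
    have : ¬J.Adj v v := J.irrefl
    simp only [Finset.mem_union, Finset.mem_insert, Finset.mem_filter, Finset.mem_erase,
      absorb_adj] at hw ⊢
    grind
  have hinter : {w ∈ X.erase v | J.Adj u w} ∩ {w ∈ X | J.Adj v w} ⊆
      {w ∈ {w ∈ X | J.Adj u w} | J.Adj v w} := fun w hw => by
    simp only [Finset.mem_inter, Finset.mem_filter, Finset.mem_erase] at hw ⊢
    tauto
  have hcard := Finset.card_union_add_card_inter {w ∈ X.erase v | J.Adj u w} {w ∈ X | J.Adj v w}
  have hle := (Finset.card_le_card hunion).trans (Finset.card_insert_le _ _)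
  have hle' := Finset.card_le_card hinter
  simp only [degIn]
  omega

lemma sum_degIn_le_absorb (hu : u ∈ X) (hv : v ∈ X) (huv : u ≠ v) :
    ∑ w ∈ X, degIn J X w ≤ ∑ w ∈ X.erase v, degIn (absorb J u v) (X.erase v) w +
      2 * degIn J {w ∈ X | J.Adj u w} v + 2 := by
  have hu' : u ∈ X.erase v := Finset.mem_erase.2 ⟨huv, hu⟩
  have hrest : ∑ w ∈ (X.erase v).erase u, degIn (absorb J u v) ((X.erase v).erase u) w =
      ∑ w ∈ (X.erase v).erase u, degIn J ((X.erase v).erase u) w :=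
    Finset.sum_congr rfl fun w hw => congrArg Finset.card <| Finset.filter_congr fun x hx =>
      absorb_adj_of_ne (Finset.ne_of_mem_erase hw) (Finset.ne_of_mem_erase hx)
  rw [sum_degIn_erase J hv, sum_degIn_erase J hu', sum_degIn_erase _ hu', hrest]
  have := degIn_add_degIn_le_absorb J X u v
  omega

lemma degIn_absorb_le (hv : v ∈ X) {z : V} (hz : z ≠ u) :
    degIn (absorb J u v) (X.erase v) z ≤ degIn J X z := by
  by_cases h : J.Adj z v
  · have hsub : {w ∈ X.erase v | (absorb J u v).Adj z w} ⊆
        insert u ({w ∈ X | J.Adj z w}.erase v) := fun w hw => by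
      simp only [Finset.mem_insert, Finset.mem_filter, Finset.mem_erase, absorb_adj] at hw ⊢
      tauto
    refine (Finset.card_le_card hsub).trans ((Finset.card_insert_le _ _).trans_eq ?_)
    exact Finset.card_erase_add_one (Finset.mem_filter.2 ⟨hv, h⟩)
  · refine Finset.card_le_card fun w hw => ?_
    have : ¬J.Adj v z := fun h' => h h'.symm
    simp only [Finset.mem_filter, Finset.mem_erase, absorb_adj] at hw ⊢
    tauto

end Minors

section DenseMinors

variable {α V W : Type*} {G : SimpleGraph W} {J : SimpleGraph V} {U X : Finset V} {u v : V} {d : ℝ}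

/-- Every edge of `J[X]` lies in more than `c - 1` triangles of `J[X]`. The shift by `1` makes `c`
comparable with the number of edges lost when an edge is contracted. -/
def IsTriangleRich (J : SimpleGraph V) (X : Finset V) (c : ℝ) : Prop :=
  ∀ u ∈ X, ∀ v ∈ X, J.Adj u v → c < degIn J {w ∈ X | J.Adj u w} v + 1

lemma IsTriangleRich.le_degIn_closed_neighborhood (h : IsTriangleRich J X d) (hvX : v ∈ X)
    (hv : d ≤ degIn J X v) :
    ∀ u ∈ insert v {w ∈ X | J.Adj v w}, d ≤ degIn J (insert v {w ∈ X | J.Adj v w}) u := by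
  intro u hu
  obtain rfl | hu := Finset.mem_insert.1 hu
  · refine hv.trans (Nat.cast_le.2 (Finset.card_le_card fun w hw => ?_))
    exact Finset.mem_filter.2 ⟨Finset.mem_insert_of_mem hw, (Finset.mem_filter.1 hw).2⟩
  · obtain ⟨huX, huv⟩ := Finset.mem_filter.1 hu
    refine (h v hvX u huX huv).le.trans_eq ?_
    rw [degIn, degIn, Finset.filter_insert, if_pos huv.symm, Finset.card_insert_of_notMem (by simp),
      Nat.cast_succ]

lemma exists_degIn_le_of_sum_degIn_le (hd : 0 < d) (hUX : U ⊆ X) (hU : #U < d) (hX : 6 * d < #X)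
    (hsum : ∑ w ∈ X, degIn J X w ≤ 2 * d * #X) :
    ∃ v ∈ X, v ∉ U ∧ degIn J X v ≤ 4 * d := by
  by_contra! hdeg
  have hlarge : #(X \ U) * (4 * d) ≤ ∑ w ∈ X, (degIn J X w : ℝ) := by
    rw [← nsmul_eq_mul]
    refine (Finset.card_nsmul_le_sum _ _ _ fun w hw => ?_).trans
      (Finset.sum_le_sum_of_subset_of_nonneg Finset.sdiff_subset fun _ _ _ => Nat.cast_nonneg _)
    exact (hdeg w (Finset.mem_sdiff.1 hw).1 (Finset.mem_sdiff.1 hw).2).le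
  have hcard : (#(X \ U) : ℝ) = #X - #U := by
    rw [Finset.card_sdiff_of_subset hUX, Nat.cast_sub (Finset.card_le_card hUX)]
  push_cast at hsum
  nlinarith

/-- Closed neighbourhoods of low-degree vertices are small and have minimum degree `d / 2` by the
codegree condition, so they can be added one at a time until the set is large enough. -/
lemma IsTriangleRich.exists_subset_half_le_degIn (h : IsTriangleRich J X (d / 2)) (hd : 1 ≤ d)
    (hX : d ≤ #X) (hdeg : ∀ v ∈ X, d / 2 ≤ degIn J X v)
    (hsum : ∑ w ∈ X, degIn J X w ≤ 2 * d * #X) :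
    ∃ U ⊆ X, #U ≤ 6 * d ∧ d ≤ #U ∧ ∀ v ∈ U, d / 2 ≤ degIn J U v := by
  by_cases hsmall : #X ≤ 6 * d
  · exact ⟨X, subset_rfl, hsmall, hX, hdeg⟩
  obtain ⟨U, hU, hmax⟩ := Finset.exists_max_image
    {U ∈ X.powerset | #U ≤ 6 * d ∧ ∀ v ∈ U, d / 2 ≤ degIn J U v} Finset.card
    ⟨∅, by simpa using (zero_le_one.trans hd)⟩
  obtain ⟨hUX, hU6, hUdeg⟩ := Finset.mem_filter.1 hU
  rw [Finset.mem_powerset] at hUX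
  refine ⟨U, hUX, hU6, le_of_not_gt fun hlt => ?_, hUdeg⟩
  obtain ⟨v, hvX, hvU, hv⟩ :=
    exists_degIn_le_of_sum_degIn_le (by linarith) hUX hlt (not_le.1 hsmall) hsum
  set N := insert v {w ∈ X | J.Adj v w}
  have hN : ∀ u ∈ N, d / 2 ≤ degIn J N u :=
    h.le_degIn_closed_neighborhood hvX (hdeg v hvX)
  have hNcard : (#N : ℝ) ≤ degIn J X v + 1 := by exact_mod_cast Finset.card_insert_le _ _
  have hcard : (#(U ∪ N) : ℝ) ≤ #U + #N := by exact_mod_cast Finset.card_union_le U N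
  have hlarger : #U < #(U ∪ N) := Finset.card_lt_card <|
    Finset.ssubset_iff_of_subset Finset.subset_union_left |>.2
      ⟨v, Finset.mem_union_right _ (Finset.mem_insert_self _ _), hvU⟩
  refine hlarger.not_ge (hmax _ (Finset.mem_filter.2 ⟨?_, by linarith, fun w hw => ?_⟩))
  · exact Finset.mem_powerset.2 <| Finset.union_subset hUX <|
      Finset.insert_subset hvX (Finset.filter_subset _ _)
  · rcases Finset.mem_union.1 hw with hw | hw
    · exact (hUdeg w hw).trans (Nat.cast_le.2 (degIn_mono Finset.subset_union_left w))
    · exact (hN w hw).trans (Nat.cast_le.2 (degIn_mono Finset.subset_union_right w))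

/-- `J[X]` is a nonempty minor of `G` of average degree at least `d`. -/
structure IsDenseMinor (G : SimpleGraph W) (d : ℝ) (J : SimpleGraph V) (X : Finset V) : Prop where
  nonempty : X.Nonempty
  isMinor : IsMinor (J.induce (X : Set V)) G
  mul_card_le : d * #X ≤ ∑ w ∈ X, degIn J X w

namespace IsDenseMinor

lemma le_card (h : IsDenseMinor G d J X) : d ≤ #X := by
  have hX : (0 : ℝ) < #X := Nat.cast_pos.2 h.nonempty.card_pos
  refine le_of_mul_le_mul_right (h.mul_card_le.trans ?_) hX
  rw [← nsmul_eq_mul]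
  push_cast
  exact Finset.sum_le_card_nsmul _ _ _ fun w _ => Nat.cast_le.2 (degIn_le_card J X w)

end IsDenseMinor

/-- `J[X]` has the fewest vertices among the minors of `G` of average degree at least `d`. -/
structure IsSmallestDenseMinor (G : SimpleGraph W) (d : ℝ) (J : SimpleGraph V) (X : Finset V) :
    Prop extends IsDenseMinor G d J X where
  card_le : ∀ (J' : SimpleGraph V) (X' : Finset V), IsDenseMinor G d J' X' → #X ≤ #X'

lemma IsDenseMinor.exists_isSmallestDenseMinor (h : IsDenseMinor G d J X) :
    ∃ (J : SimpleGraph V) (X : Finset V), IsSmallestDenseMinor G d J X := by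
  have hex : ∃ n J X, IsDenseMinor (V := V) G d J X ∧ #X = n := ⟨_, J, X, h, rfl⟩
  obtain ⟨J₀, X₀, h₀, hcard⟩ := Nat.find_spec hex
  exact ⟨J₀, X₀, h₀, fun J' X' h' => hcard ▸ Nat.find_min' hex ⟨J', X', h', rfl⟩⟩

namespace IsSmallestDenseMinor

lemma sum_degIn_lt_of_erase (h : IsSmallestDenseMinor G d J X) (hd : 1 < d) (hv : v ∈ X)
    {J' : SimpleGraph V} (hJ' : IsMinor (J'.induce (X.erase v : Set V)) G) :
    ∑ w ∈ X.erase v, degIn J' (X.erase v) w < d * (#X - 1) := by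
  have hcard : 1 < #X := by exact_mod_cast hd.trans_le h.le_card
  have herase : #(X.erase v) = #X - 1 := Finset.card_erase_of_mem hv
  by_contra! hle
  have := h.card_le J' (X.erase v) ⟨Finset.card_pos.1 (by omega), hJ', by
    rwa [herase, Nat.cast_pred (by omega)]⟩
  omega

lemma sum_degIn_lt (h : IsSmallestDenseMinor G d J X) (hd : 1 < d) (hv : v ∈ X) :
    ∑ w ∈ X, degIn J X w < d * (#X - 1) + 2 * degIn J X v := by
  have := h.sum_degIn_lt_of_erase hd hv (h.isMinor.induce_mono (Finset.erase_subset v X))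
  rw [sum_degIn_erase J hv]
  push_cast at this ⊢
  linarith

lemma half_lt_degIn (h : IsSmallestDenseMinor G d J X) (hd : 1 < d) (hv : v ∈ X) :
    d / 2 < degIn J X v := by
  linarith [h.sum_degIn_lt hd hv, h.mul_card_le]

lemma isTriangleRich (h : IsSmallestDenseMinor G d J X) (hd : 1 < d) :
    IsTriangleRich J X (d / 2) := by
  intro u hu v hv huv
  have hlt := h.sum_degIn_lt_of_erase hd hv (h.isMinor.induce_erase_absorb hu hv huv)
  have hle : ((∑ w ∈ X, degIn J X w : ℕ) : ℝ) ≤ _ :=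
    Nat.cast_le.2 (sum_degIn_le_absorb hu hv huv.ne)
  push_cast at hlt hle
  have := h.mul_card_le
  push_cast at this
  linarith

lemma sum_degIn_le (h : IsSmallestDenseMinor G d J X) (hd : 1 < d) (hX : 3 ≤ #X) :
    ∑ w ∈ X, degIn J X w ≤ 2 * d * #X := by
  have havg : #X * (∑ w ∈ X, degIn J X w : ℝ) ≤
      #X * (d * (#X - 1)) + 2 * ∑ w ∈ X, (degIn J X w : ℝ) := by
    rw [Finset.mul_sum _ _ (2 : ℝ), ← nsmul_eq_mul, ← nsmul_eq_mul #X (d * _), ← Finset.sum_const,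
      ← Finset.sum_const, ← Finset.sum_add_distrib]
    exact Finset.sum_le_sum fun v hv => by exact_mod_cast (h.sum_degIn_lt hd hv).le
  have hX' : (3 : ℝ) ≤ #X := by exact_mod_cast hX
  push_cast
  refine le_of_mul_le_mul_left (a := (#X : ℝ) - 2) ?_ (by linarith)
  nlinarith [mul_nonneg (mul_nonneg (by linarith : (0 : ℝ) ≤ d) (by linarith : (0 : ℝ) ≤ #X))
    (by linarith : (0 : ℝ) ≤ #X - 3)]

end IsSmallestDenseMinor

lemma IsDenseMinor.exists_subset_half_le_degIn (h : IsDenseMinor G d J X) (hd : 2 < d) :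
    ∃ (J : SimpleGraph V) (X U : Finset V), IsMinor (J.induce (X : Set V)) G ∧ U ⊆ X ∧
      #U ≤ 6 * d ∧ d ≤ #U ∧ ∀ v ∈ U, d / 2 ≤ degIn J U v := by
  obtain ⟨J, X, h⟩ := h.exists_isSmallestDenseMinor
  have hX : 2 < #X := by exact_mod_cast hd.trans_le h.le_card
  obtain ⟨U, hU⟩ := (h.isTriangleRich (by linarith)).exists_subset_half_le_degIn (by linarith)
    h.le_card (fun v hv => (h.half_lt_degIn (by linarith) hv).le) (h.sum_degIn_le (by linarith) hX)
  exact ⟨J, X, U, h.isMinor, hU⟩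

lemma IsTiled.isMinor [Fintype α] {H : SimpleGraph α} {S : Finset V} {s t : ℕ} {γ : ℝ}
    (hS : IsTiled J t S) (hX : IsMinor (J.induce (X : Set V)) G) (hSX : S ⊆ X)
    (hH : H.Colorable 2) (hs : ∀ v, (H.connectedComponentMk v).supp.ncard ≤ s) (hγ : 0 < γ)
    (hγ1 : γ ≤ 1) (ht : 12 * s ≤ γ * t) (ht0 : 0 < t) (hα : 0 < Fintype.card α)
    (hcard : (1 + γ / 2) * Fintype.card α ≤ #S) : IsMinor H G := by
  obtain ⟨f, hf, hmem⟩ := hS.exists_injective_hom hH hs hγ hγ1 ht ht0 hα hcard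
  exact hX.of_injective_hom ⟨fun x => ⟨f x, hSX (hmem x)⟩, fun hxy => f.map_adj hxy⟩
    fun x y hxy => hf (congrArg Subtype.val hxy)

end DenseMinors

section HalfDenseMinors

lemma exists_isMinor_of_isHalfDense {γ C : ℝ} (s : ℕ) (hγ : 0 < γ) (hγ1 : γ ≤ 1)
    (hC : 0 < C) :
    ∃ M : ℕ, ∀ {α : Type u} {V : Type v} {W : Type*} [Fintype α] {H : SimpleGraph α}
      {G : SimpleGraph W} {J : SimpleGraph V} {U X : Finset V}, H.Colorable 2 →
      (∀ v, (H.connectedComponentMk v).supp.ncard ≤ s) → M ≤ Fintype.card α →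
      IsMinor (J.induce (X : Set V)) G → U ⊆ X → IsHalfDense J γ C (Fintype.card α) U →
      IsMinor H G := by
  obtain ⟨t, ht⟩ := exists_nat_gt (12 * s / γ)
  have ht0 : 0 < t := by exact_mod_cast (by positivity : 0 ≤ 12 * s / γ).trans_lt ht
  obtain ⟨M, hM⟩ := exists_isTiled_of_isHalfDense hγ hγ1 hC ht0
  refine ⟨max M 1, fun {α V W} _ {H G J U X} hH hs hα hX hUX hU => ?_⟩
  obtain ⟨S, hSU, hS, hcard⟩ := hM _ (le_of_max_le_left hα) hU
  exact hS.isMinor hX (hSU.trans hUX) hH hs hγ hγ1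
    (by rw [div_lt_iff₀ hγ] at ht; linarith) ht0 (le_of_max_le_right hα) hcard

lemma exists_isMinor_of_isDenseMinor (s : ℕ) :
    ∃ M : ℕ, ∀ {α : Type u} {V : Type v} {W : Type*} [Fintype α] {H : SimpleGraph α}
      {G : SimpleGraph W} {J : SimpleGraph V} {X : Finset V}, H.Colorable 2 →
      (∀ v, (H.connectedComponentMk v).supp.ncard ≤ s) → M ≤ Fintype.card α →
      IsDenseMinor G (1001 / 1000 * Fintype.card α) J X → IsMinor H G := by
  obtain ⟨M, hM⟩ := exists_isMinor_of_isHalfDense s (γ := 1 / 1000) (C := 7) (by norm_num)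
    (by norm_num) (by norm_num)
  refine ⟨max M 2, fun {α V W} _ {H G J X} hH hs hα h => ?_⟩
  have hn : (2 : ℝ) ≤ Fintype.card α := by exact_mod_cast le_of_max_le_right hα
  obtain ⟨J, X, U, hX, hUX, hU, hU', hdeg⟩ := h.exists_subset_half_le_degIn (by linarith)
  exact hM hH hs (le_of_max_le_left hα) hX hUX
    ⟨by linarith, by linarith, fun v hv => by linarith [hdeg v hv]⟩

end HalfDenseMinors

section SparseGraphs

lemma exists_sum_degIn_le {t : ℕ} {ε : ℝ} (hε : 0 < ε) (ht : 0 < t) :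
    ∃ N : ℕ, ∀ n ≥ N, ∀ {V : Type u} (G : SimpleGraph V) (X : Finset V), #X ≤ 2 * n →
      (∀ A ⊆ X, ∀ B ⊆ X, ¬IsBiclique G t A B) → ∑ v ∈ X, (degIn G X v : ℝ) ≤ ε * n ^ 2 := by
  obtain ⟨N, hN⟩ := exists_isBiclique_of_le_sum_degIn (ε := ε / 4) (by positivity) ht
  obtain ⟨N', hN'⟩ := exists_nat_gt (2 * N / ε)
  refine ⟨N', fun n hn V G X hX hfree => ?_⟩
  by_contra! hlt
  have hX' : (#X : ℝ) ≤ 2 * n := by exact_mod_cast hX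
  have hn' : 2 * N / ε < n := hN'.trans_le (Nat.cast_le.2 hn)
  have hn0 : (0 : ℝ) < n := lt_of_le_of_lt (by positivity) hn'
  have hsum : ∑ v ∈ X, (degIn G X v : ℝ) ≤ #X * #X := by
    rw [← nsmul_eq_mul]
    exact Finset.sum_le_card_nsmul _ _ _ fun v _ => Nat.cast_le.2 (degIn_le_card G X v)
  have hNX : (N : ℝ) ≤ #X := by
    rw [div_lt_iff₀ hε] at hn'
    nlinarith [mul_le_mul_of_nonneg_left hX' (Nat.cast_nonneg (α := ℝ) #X)]
  have hsq : (#X : ℝ) ^ 2 ≤ (2 * n) ^ 2 := by gcongr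
  obtain ⟨A, hA, B, hB, hAB⟩ := hN G X (Nat.cast_le.1 hNX) (by nlinarith)
  exact hfree A hA B hB hAB

variable {W : Type*} [Fintype W] {G J : SimpleGraph W} {X Y Z : Finset W} {u v w y : W}
  {k : ℕ} {c d δ η : ℝ}

lemma degIn_add_degIn_compl (G : SimpleGraph W) (Y : Finset W) (v : W) :
    degIn G Y v + degIn G Yᶜ v = degIn G Finset.univ v := by
  rw [← degIn_union G disjoint_compl_right, Finset.union_compl]

/-- The average degree of `G` exceeds `d` by a factor of at most `1 + δ`, while the minimum degree
is at least `(1 - δ) * d`. -/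
structure IsNearRegular (G : SimpleGraph W) (δ d : ℝ) : Prop where
  le_degIn : ∀ w, (1 - δ) * d ≤ degIn G Finset.univ w
  sum_le : ∑ w, (degIn G Finset.univ w : ℝ) ≤ (1 + δ) * d * Fintype.card W

namespace IsNearRegular

lemma sum_degIn_le (h : IsNearRegular G δ d) (X : Finset W) :
    ∑ w ∈ X, (degIn G Finset.univ w : ℝ) ≤
      2 * δ * d * Fintype.card W + (1 - δ) * d * #X := by
  have hcompl : #Xᶜ * ((1 - δ) * d) ≤ ∑ w ∈ Xᶜ, (degIn G Finset.univ w : ℝ) := by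
    rw [← nsmul_eq_mul]
    exact Finset.card_nsmul_le_sum _ _ _ fun w _ => h.le_degIn w
  have hcard : (#X + #Xᶜ : ℝ) = Fintype.card W := by exact_mod_cast Finset.card_add_card_compl X
  have hsplit := Finset.sum_add_sum_compl X fun w => (degIn G Finset.univ w : ℝ)
  rw [← hcard]
  have := h.sum_le
  rw [← hcard] at this
  linarith

lemma card_two_mul_le_degIn_le (h : IsNearRegular G δ d) (hδ : 0 ≤ δ) (hd : 0 < d) :
    (#{w | 2 * d ≤ degIn G Finset.univ w} : ℝ) ≤ 2 * δ * Fintype.card W := by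
  have hle : #{w | 2 * d ≤ degIn G Finset.univ w} * (2 * d) ≤
      ∑ w with 2 * d ≤ degIn G Finset.univ w, (degIn G Finset.univ w : ℝ) := by
    rw [← nsmul_eq_mul]
    exact Finset.card_nsmul_le_sum _ _ _ fun w hw => (Finset.mem_filter.1 hw).2
  have hsum := h.sum_degIn_le {w | 2 * d ≤ degIn G Finset.univ w}
  refine le_of_mul_le_mul_right ?_ hd
  nlinarith [mul_nonneg (mul_nonneg hδ hd.le)
    (Nat.cast_nonneg (α := ℝ) #{w | 2 * d ≤ degIn G Finset.univ w})]

lemma sum_degIn_compl_le (h : IsNearRegular G δ d) (hδ : 0 ≤ δ) (hd : 0 ≤ d)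
    (hY : #Yᶜ ≤ η * Fintype.card W) :
    ∑ y ∈ Y, (degIn G Yᶜ y : ℝ) ≤ (2 * δ + η) * d * Fintype.card W := by
  calc ∑ y ∈ Y, (degIn G Yᶜ y : ℝ) = ∑ y ∈ Yᶜ, (degIn G Y y : ℝ) := by
        exact_mod_cast sum_degIn_comm G Y Yᶜ
    _ ≤ ∑ y ∈ Yᶜ, (degIn G Finset.univ y : ℝ) :=
        Finset.sum_le_sum fun y _ => Nat.cast_le.2 (degIn_mono (Finset.subset_univ Y) y)
    _ ≤ 2 * δ * d * Fintype.card W + (1 - δ) * d * #Yᶜ := h.sum_degIn_le Yᶜ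
    _ ≤ 2 * δ * d * Fintype.card W + d * #Yᶜ := by
        gcongr
        nlinarith
    _ ≤ (2 * δ + η) * d * Fintype.card W := by nlinarith

lemma le_sum_degIn (h : IsNearRegular G δ d) (hδ : 0 ≤ δ) (hδ1 : δ ≤ 1) (hd : 0 ≤ d)
    (hY : #Yᶜ ≤ η * Fintype.card W) :
    (1 - 3 * δ - 2 * η) * d * Fintype.card W ≤ ∑ y ∈ Y, (degIn G Y y : ℝ) := by
  have hsplit : ∑ y ∈ Y, (degIn G Y y : ℝ) + ∑ y ∈ Y, (degIn G Yᶜ y : ℝ) =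
      ∑ y ∈ Y, (degIn G Finset.univ y : ℝ) := by
    rw [← Finset.sum_add_distrib]
    exact Finset.sum_congr rfl fun y _ => by exact_mod_cast degIn_add_degIn_compl G Y y
  have hle : #Y * ((1 - δ) * d) ≤ ∑ y ∈ Y, (degIn G Finset.univ y : ℝ) := by
    rw [← nsmul_eq_mul]
    exact Finset.card_nsmul_le_sum _ _ _ fun w _ => h.le_degIn w
  have hcard : (#Y + #Yᶜ : ℝ) = Fintype.card W := by exact_mod_cast Finset.card_add_card_compl Y
  have hcompl := h.sum_degIn_compl_le hδ hd hY
  have hloss : (#Yᶜ : ℝ) * ((1 - δ) * d) ≤ η * Fintype.card W * d := by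
    have : (1 - δ) * d ≤ d := by nlinarith
    have : 0 ≤ (1 - δ) * d := mul_nonneg (by linarith) hd
    gcongr
    exact (Nat.cast_nonneg _).trans hY
  have hY' : (#Y : ℝ) = Fintype.card W - #Yᶜ := by linarith
  rw [hY'] at hle
  linarith

end IsNearRegular

/-- A stage of the contraction process on `G`: the minor `J[X]` arises by successively contracting
`k` edges, each in fewer than `c` triangles (so that each contraction costs at most `c` edges), and
`Z` consists of vertices not involved in any of the contractions. -/
structure IsContraction (G : SimpleGraph W) (c : ℝ) (k : ℕ) (J : SimpleGraph W)
    (X Z : Finset W) : Prop where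
  isMinor : IsMinor (J.induce (X : Set W)) G
  subset : Z ⊆ X
  card_add : #X + k = Fintype.card W
  le_card : Fintype.card W ≤ #Z + 2 * k
  adj_iff : ∀ x ∈ Z, ∀ y ∈ Z, (J.Adj x y ↔ G.Adj x y)
  degIn_le : ∀ z ∈ Z, degIn J X z ≤ degIn G Finset.univ z
  sum_le : ∑ w, (degIn G Finset.univ w : ℝ) ≤ ∑ w ∈ X, (degIn J X w : ℝ) + k * (2 * c)

namespace IsContraction

lemma refl (G : SimpleGraph W) (c : ℝ) : IsContraction G c 0 G Finset.univ Finset.univ where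
  isMinor := isMinor_induce G _
  subset := subset_rfl
  card_add := Finset.card_univ
  le_card := Finset.card_univ.ge
  adj_iff _ _ _ _ := Iff.rfl
  degIn_le _ _ := le_rfl
  sum_le := by simp

lemma contract (h : IsContraction G c k J X Z) (hu : u ∈ X) (hv : v ∈ X) (huv : J.Adj u v)
    (hc : degIn J {w ∈ X | J.Adj u w} v + 1 ≤ c) :
    IsContraction G c (k + 1) (absorb J u v) (X.erase v) ((Z.erase u).erase v) where
  isMinor := h.isMinor.induce_erase_absorb hu hv huv
  subset := Finset.erase_subset_erase _ ((Finset.erase_subset _ _).trans h.subset)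
  card_add := by
    have := h.card_add
    have := Finset.card_erase_add_one hv
    omega
  le_card := by
    have := h.le_card
    have := Finset.pred_card_le_card_erase (s := Z) (a := u)
    have := Finset.pred_card_le_card_erase (s := Z.erase u) (a := v)
    omega
  adj_iff x hx y hy := by
    simp only [Finset.mem_erase] at hx hy
    rw [absorb_adj_of_ne hx.2.1 hy.2.1]
    exact h.adj_iff x hx.2.2 y hy.2.2
  degIn_le z hz := by
    simp only [Finset.mem_erase] at hz
    exact (degIn_absorb_le hv hz.2.1).trans (h.degIn_le z hz.2.2)
  sum_le := by
    have hle : ((∑ w ∈ X, degIn J X w : ℕ) : ℝ) ≤ _ :=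
      Nat.cast_le.2 (sum_degIn_le_absorb hu hv huv.ne)
    have := h.sum_le
    push_cast at hle ⊢
    linarith

lemma exists_or_exists_isTriangleRich (G : SimpleGraph W) (c : ℝ) (k : ℕ) :
    (∃ J X Z, IsContraction G c k J X Z) ∨ ∃ l ≤ k, ∃ J X Z,
      IsContraction G c l J X Z ∧ IsTriangleRich J X c := by
  induction k with
  | zero => exact .inl ⟨G, _, _, refl G c⟩
  | succ k ih =>
    obtain ⟨J, X, Z, h⟩ | ⟨l, hl, hrich⟩ := ih
    · by_cases hrich : IsTriangleRich J X c
      · exact .inr ⟨k, k.le_succ, J, X, Z, h, hrich⟩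
      · unfold IsTriangleRich at hrich
        push Not at hrich
        obtain ⟨u, hu, v, hv, huv, hc⟩ := hrich
        exact .inl ⟨_, _, _, h.contract hu hv huv hc⟩
    · exact .inr ⟨l, hl.trans k.le_succ, hrich⟩

lemma degIn_sdiff_le (h : IsContraction G c k J X Z) (hY : Y ⊆ Z) (hy : y ∈ Y) :
    degIn J (X \ Y) y ≤ degIn G Yᶜ y := by
  have hle := h.degIn_le y (hY hy)
  rw [← degIn_add_degIn_compl G Y, ← Finset.union_sdiff_of_subset (hY.trans h.subset),
    degIn_union J Finset.disjoint_sdiff] at hle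
  have heq : degIn J Y y = degIn G Y y := congrArg Finset.card <|
    Finset.filter_congr fun z hz => h.adj_iff y (hY hy) z (hY hz)
  omega

lemma codegree_le (h : IsContraction G c k J X Z) (hY : Y ⊆ Z) (hy : y ∈ Y) (hw : w ∈ Y) :
    degIn J {z ∈ X | J.Adj y z} w ≤ degIn G {z ∈ Y | G.Adj y z} w + degIn G Yᶜ y := by
  refine le_trans ?_ (Nat.add_le_add_left (h.degIn_sdiff_le hY hy) _)
  refine (Finset.card_le_card fun z hz => ?_).trans (Finset.card_union_le _ _)
  simp only [Finset.mem_filter, Finset.mem_union, Finset.mem_sdiff] at hz ⊢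
  by_cases hzY : z ∈ Y
  · exact .inl ⟨⟨hzY, (h.adj_iff y (hY hy) z (hY hzY)).1 hz.1.2⟩,
      (h.adj_iff w (hY hw) z (hY hzY)).1 hz.2⟩
  · exact .inr ⟨⟨hz.1.1, hzY⟩, hz.1.2⟩

lemma degIn_mul_le (h : IsContraction G c k J X Z) (hJ : IsTriangleRich J X c) (hY : Y ⊆ Z)
    (hy : y ∈ Y) :
    degIn G Y y * (c - 1 - degIn G Yᶜ y) ≤
      ∑ w ∈ Y with G.Adj y w, (degIn G {z ∈ Y | G.Adj y z} w : ℝ) := by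
  rw [degIn, ← nsmul_eq_mul]
  refine Finset.card_nsmul_le_sum _ _ _ fun w hw => ?_
  obtain ⟨hwY, hyw⟩ := Finset.mem_filter.1 hw
  have hlt := hJ y (h.subset (hY hy)) w (h.subset (hY hwY))
    ((h.adj_iff y (hY hy) w (hY hwY)).2 hyw)
  have hle : (degIn J {z ∈ X | J.Adj y z} w : ℝ) ≤ _ := Nat.cast_le.2 (h.codegree_le hY hy hwY)
  push_cast at hle
  linarith

/-- Otherwise some vertex of `Y` would have a dense neighbourhood without `K_{t,t}`. -/
lemma exists_isBiclique {t : ℕ} (ht : 0 < t) : ∃ M : ℕ, ∀ n ≥ M, ∀ {W : Type u} [Fintype W]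
    {G J : SimpleGraph W} {X Y Z : Finset W} {k : ℕ}, IsContraction G (n / 4) k J X Z →
    IsTriangleRich J X (n / 4) → IsNearRegular G (1 / 1000) n → Y ⊆ Z →
    (∀ y ∈ Y, (degIn G Finset.univ y : ℝ) < 2 * n) →
    (#Yᶜ : ℝ) ≤ 11 / 1000 * Fintype.card W → 0 < Fintype.card W →
    ∃ A ⊆ Y, ∃ B ⊆ Y, IsBiclique G t A B := by
  obtain ⟨M, hM⟩ := exists_sum_degIn_le (ε := 1 / 10) (by norm_num) ht
  refine ⟨max M 10, fun n hn {W} _ {G J X Y Z k} h hrich hreg hY hdeg hYc hW => ?_⟩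
  by_contra! hfree
  have hn' : (10 : ℝ) ≤ n := by exact_mod_cast le_of_max_le_right hn
  have hW' : (0 : ℝ) < Fintype.card W := Nat.cast_pos.2 hW
  have hpointwise : ∀ y ∈ Y,
      (n / 4 - 1) * degIn G Y y - 2 * n * degIn G Yᶜ y ≤ (1 / 10 * n ^ 2 : ℝ) := fun y hy => by
    have hdegY : (degIn G Y y : ℝ) ≤ 2 * n :=
      (Nat.cast_le.2 (degIn_mono (Finset.subset_univ Y) y)).trans (hdeg y hy).le
    have hsum := (h.degIn_mul_le hrich hY hy).trans <|
      hM n (le_of_max_le_left hn) G {w ∈ Y | G.Adj y w} (by exact_mod_cast hdegY)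
        fun A hA B hB => hfree A (hA.trans (Finset.filter_subset _ _)) B
          (hB.trans (Finset.filter_subset _ _))
    nlinarith [mul_le_mul_of_nonneg_right hdegY (Nat.cast_nonneg (α := ℝ) (degIn G Yᶜ y))]
  have hsum := Finset.sum_le_card_nsmul _ _ _ hpointwise
  rw [Finset.sum_sub_distrib, ← Finset.mul_sum, ← Finset.mul_sum, nsmul_eq_mul] at hsum
  have hinner := mul_le_mul_of_nonneg_left
    (hreg.le_sum_degIn (by norm_num) (by norm_num) n.cast_nonneg hYc)
    (by linarith : (0 : ℝ) ≤ n / 4 - 1)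
  have houter := mul_le_mul_of_nonneg_left
    (hreg.sum_degIn_compl_le (by norm_num) n.cast_nonneg hYc)
    (by positivity : (0 : ℝ) ≤ 2 * n)
  have hcard : (#Y : ℝ) * (1 / 10 * n ^ 2) ≤ Fintype.card W * (1 / 10 * n ^ 2) := by
    gcongr
    exact Finset.card_le_univ Y
  nlinarith [mul_pos (mul_pos hW' (by linarith : (0 : ℝ) < n)) (by linarith : (0 : ℝ) < n)]

end IsContraction

lemma IsNearRegular.card_compl_le {n : ℕ} {S : Finset W} (h : IsNearRegular G (1 / 1000) n)
    (hn : 0 < n) (hW : 100000 * n ≤ Fintype.card W) (hS : #S ≤ 2 * n)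
    (hZ : Fintype.card W ≤ #Z + 2 * ⌈4 / 1000 * (Fintype.card W : ℝ)⌉₊) :
    (#({z ∈ Z | (degIn G Finset.univ z : ℝ) < 2 * n} \ S)ᶜ : ℝ) ≤ 11 / 1000 * Fintype.card W := by
  have hsub : ({z ∈ Z | (degIn G Finset.univ z : ℝ) < 2 * n} \ S)ᶜ ⊆
      Zᶜ ∪ (({w | 2 * (n : ℝ) ≤ degIn G Finset.univ w} : Finset W) ∪ S) := fun w hw => by
    simp only [Finset.mem_compl, Finset.mem_sdiff, Finset.mem_filter, Finset.mem_union,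
      Finset.mem_univ, true_and, ← not_lt] at hw ⊢
    tauto
  have hcard : (#({z ∈ Z | (degIn G Finset.univ z : ℝ) < 2 * n} \ S)ᶜ : ℝ) ≤
      #Zᶜ + (#{w | 2 * (n : ℝ) ≤ degIn G Finset.univ w} + #S) := by
    exact_mod_cast (Finset.card_le_card hsub).trans <| (Finset.card_union_le _ _).trans <|
      Nat.add_le_add_left (Finset.card_union_le _ _) _
  have hZ' : (#Z + #Zᶜ : ℝ) = Fintype.card W := by exact_mod_cast Finset.card_add_card_compl Z
  have hlarge := h.card_two_mul_le_degIn_le (by norm_num) (Nat.cast_pos.2 hn)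
  have hceil := Nat.ceil_lt_add_one (by positivity : 0 ≤ 4 / 1000 * (Fintype.card W : ℝ))
  have hn' : (1 : ℝ) ≤ n := Nat.one_le_cast.2 hn
  rify at hW hS hZ
  linarith

/-- Contracting `4 / 1000 * |W|` edges, each at a cost of at most `n / 4` edges, raises the average
degree from `999 / 1000 * n` to `1001 / 1000 * n`. -/
lemma IsContraction.isDenseMinor {n : ℕ}
    (h : IsContraction G (n / 4) ⌈4 / 1000 * (Fintype.card W : ℝ)⌉₊ J X Z)
    (hmin : ∀ w, 999 / 1000 * (n : ℝ) ≤ degIn G Finset.univ w)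
    (hW : 1000 ≤ Fintype.card W) : IsDenseMinor G (1001 / 1000 * n) J X := by
  have hW' : (1000 : ℝ) ≤ Fintype.card W := by exact_mod_cast hW
  have hcard : (#X + ⌈4 / 1000 * (Fintype.card W : ℝ)⌉₊ : ℝ) = Fintype.card W := by
    exact_mod_cast h.card_add
  have hceil := Nat.ceil_lt_add_one (by positivity : 0 ≤ 4 / 1000 * (Fintype.card W : ℝ))
  have hceil' := Nat.le_ceil (4 / 1000 * (Fintype.card W : ℝ))
  have hsum := Finset.card_nsmul_le_sum Finset.univ _ _ fun w _ => hmin w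
  rw [nsmul_eq_mul, Finset.card_univ] at hsum
  refine ⟨Finset.card_pos.1 ((Nat.cast_pos (α := ℝ)).1 (by linarith)), h.isMinor, ?_⟩
  have := h.sum_le
  push_cast
  nlinarith [mul_le_mul_of_nonneg_right hceil' (Nat.cast_nonneg (α := ℝ) n)]

lemma isNearRegular_or_isDenseMinor {n : ℕ}
    (hmin : ∀ w, 999 / 1000 * (n : ℝ) ≤ degIn G Finset.univ w) (hW : 0 < Fintype.card W) :
    IsNearRegular G (1 / 1000) n ∨ IsDenseMinor G (1001 / 1000 * n) G Finset.univ := by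
  obtain hle | hlt := le_or_gt (∑ w : W, (degIn G Finset.univ w : ℝ))
    (1001 / 1000 * n * Fintype.card W)
  · exact .inl ⟨fun w => by linarith [hmin w], by linarith⟩
  · refine .inr ⟨Finset.card_pos.1 (by rwa [Finset.card_univ]), isMinor_induce G _, ?_⟩
    rw [Finset.card_univ]
    exact_mod_cast hlt.le

lemma exists_isDenseMinor_or_exists_isTiled {t : ℕ} (ht : 0 < t) :
    ∃ M : ℕ, ∀ n ≥ M, ∀ {W : Type u} [Fintype W] {G : SimpleGraph W},
      (∀ w, 999 / 1000 * (n : ℝ) ≤ degIn G Finset.univ w) → 100000 * n ≤ Fintype.card W →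
      (∃ J X, IsDenseMinor (V := W) G (1001 / 1000 * n) J X) ∨
        ∃ S, IsTiled G t S ∧ 2 * n < #S := by
  obtain ⟨M, hM⟩ := IsContraction.exists_isBiclique ht
  refine ⟨max M 1, fun n hn {W} _ {G} hmin hW => ?_⟩
  have hn0 : 0 < n := le_of_max_le_right hn
  obtain hdense | hreg := (isNearRegular_or_isDenseMinor hmin (by omega)).symm
  · exact .inl ⟨_, _, hdense⟩
  obtain ⟨J, X, Z, h⟩ | ⟨k, hk, J, X, Z, h, hrich⟩ :=
    IsContraction.exists_or_exists_isTriangleRich G (n / 4) ⌈4 / 1000 * (Fintype.card W : ℝ)⌉₊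
  · exact .inl ⟨J, X, h.isDenseMinor hmin (by omega)⟩
  obtain ⟨S, -, hS, hfree⟩ :=
    exists_maximal_isTiled G ht {z ∈ Z | (degIn G Finset.univ z : ℝ) < 2 * n}
  refine .inr ⟨S, hS, lt_of_not_ge fun hScard => ?_⟩
  obtain ⟨A, hA, B, hB, hAB⟩ := hM n (le_of_max_le_left hn) h hrich hreg
    (Finset.sdiff_subset.trans (Finset.filter_subset _ _))
    (fun y hy => (Finset.mem_filter.1 (Finset.mem_sdiff.1 hy).1).2)
    (hreg.card_compl_le hn0 hW hScard (by have := h.le_card; omega)) (by omega)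
  exact hfree A hA B hB hAB

lemma exists_isMinor_of_sparse (s : ℕ) :
    ∃ M : ℕ, ∀ {α : Type u} {W : Type v} [Fintype α] [Fintype W] {H : SimpleGraph α}
      {G : SimpleGraph W}, H.Colorable 2 → (∀ v, (H.connectedComponentMk v).supp.ncard ≤ s) →
      M ≤ Fintype.card α →
      (∀ w, 999 / 1000 * (Fintype.card α : ℝ) ≤ degIn G Finset.univ w) →
      100000 * Fintype.card α ≤ Fintype.card W → IsMinor H G := by
  obtain ⟨M₁, hM₁⟩ := exists_isMinor_of_isDenseMinor.{u, v} s
  obtain ⟨M₂, hM₂⟩ := exists_isDenseMinor_or_exists_isTiled.{v} (t := 12 * s + 1) (Nat.succ_pos _)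
  refine ⟨max (max M₁ M₂) 1, fun {α W} _ _ {H G} hH hs hα hmin hW => ?_⟩
  obtain ⟨J, X, h⟩ | ⟨S, hS, hcard⟩ := hM₂ _ (le_of_max_le_right (le_of_max_le_left hα)) hmin hW
  · exact hM₁ hH hs (le_of_max_le_left (le_of_max_le_left hα)) h
  · rify at hcard
    exact hS.isMinor (isMinor_induce G _) (Finset.subset_univ S) hH hs one_pos le_rfl
      (by push_cast; linarith) (Nat.succ_pos _) (le_of_max_le_right hα) (by linarith)

end SparseGraphs

lemma deg_eq_degIn_univ {W : Type*} [Fintype W] (G : SimpleGraph W) (w : W) :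
    deg G w = degIn G Finset.univ w := by
  rw [deg, degIn, ← Set.ncard_coe_finset]
  simp only [Finset.coe_filter, Finset.mem_univ, true_and]
  rfl

theorem bounded_component_minor_general {ν : ℝ} (hν : 0 < ν) (s : ℕ) : ∃ M : ℕ,
    ∀ (α : Type u) (W : Type v) [Fintype α] [Fintype W] (H : SimpleGraph α) (G : SimpleGraph W),
      H.Colorable 2 → (∀ v, (H.connectedComponentMk v).supp.ncard ≤ s) →
      M ≤ Fintype.card α → (∀ w, (1 - 1 / 1000) * (Fintype.card α : ℝ) ≤ deg G w) →
      (1 + ν) * (Fintype.card α : ℝ) ≤ Fintype.card W → IsMinor H G := by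
  set γ := min ν (1 / 2)
  have hγ : 0 < γ := lt_min hν one_half_pos
  have hγ2 : γ ≤ 1 / 2 := min_le_right _ _
  obtain ⟨M₁, hM₁⟩ := exists_isMinor_of_sparse.{u, v} s
  obtain ⟨M₂, hM₂⟩ := exists_isMinor_of_isHalfDense.{u, v} (C := 100000) s hγ (by linarith)
    (by norm_num)
  refine ⟨max M₁ M₂, fun α W _ _ H G hH hs hα hmin hW => ?_⟩
  simp only [deg_eq_degIn_univ] at hmin
  by_cases hsparse : 100000 * Fintype.card α ≤ Fintype.card W
  · exact hM₁ hH hs (le_of_max_le_left hα) (fun w => by linarith [hmin w]) hsparse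
  refine hM₂ hH hs (le_of_max_le_right hα) (isMinor_induce G _) (Finset.subset_univ Finset.univ)
    ⟨?_, hW.trans' ?_, fun w _ => (hmin w).trans' ?_⟩
  · rw [Finset.card_univ]
    exact_mod_cast (not_le.1 hsparse).le
  · gcongr
    exact min_le_left _ _
  · nlinarith [Nat.cast_nonneg (α := ℝ) (Fintype.card α)]

end

theorem bounded_component_minor (Δ : ℕ) (hΔ : 0 < Δ) (ν : ℝ) (hν : 0 < ν) :
    ∃ μ : ℝ, 0 < μ ∧ ∀ s : ℕ, 0 < s → ∃ M : ℕ,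
      ∀ (α W : Type) [Fintype α] [Fintype W] (H : SimpleGraph α) (G : SimpleGraph W),
        H.Colorable 2 → (∀ v, deg H v ≤ Δ) →
        (∀ v : α, (H.connectedComponentMk v).supp.ncard ≤ s) →
        M ≤ Fintype.card α →
        (∀ w : W, (1 - μ) * (Fintype.card α : ℝ) ≤ (deg G w : ℝ)) →
        (1 + ν) * (Fintype.card α : ℝ) ≤ (Fintype.card W : ℝ) →
        IsMinor H G :=
  ⟨1 / 1000, by norm_num, fun s _ => (bounded_component_minor_general hν s).imp
    fun _ hM α W _ _ H G hH _ => hM α W H G hH⟩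
end

section
/- There exists ε > 0 such that for every positive integer K there exist ε′ > 0 and C ≥ 1 (both depending on K) such that for every D ≥ C and every graph G with minimum degree δ(G) ≥ D and |V(G)| ≥ C·D, at least one of the following holds: (1) G contains pairwise vertex-disjoint subgraphs J₁, …, J_K such that |V(J_i)| ≤ D/ε and d(J_i) ≥ ε·D for every i ∈ {1,…,K}; or (2) G contains a minor H such that d(H) ≥ (1+ε′)·D/2. -/
open SimpleGraph

/-!
Write `n` for the number of vertices. If `G` has at least `(1 + 1/200) D n / 2` edges, then `G`
itself is the dense minor. Otherwise the degrees are close to `D` on average, so few vertices have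
degree above `2D`, and few vertices have many neighbours in a given small set `Y`. Suppose that
`K` disjoint dense sets of at most `2D` vertices cannot be chosen greedily: off a small set `X`,
every set of at most `2D` vertices is sparse. For `X ⊆ Y` with `Y` small, pick `v ∉ Y` of degree at
most `2D` with few neighbours in `Y`. Since `N(v) \ Y` is sparse, some `u` in it has few neighbours
there, so `u` and `v` have at most `D/4` common neighbours.

Collecting such edges greedily, with `Y` also containing the ends of the earlier ones, gives a
matching of about `n/25` edges. Contracting it costs at most `7D/16` graph edges per vertex removed,
less than the `D/2` that would preserve the density, so the density rises by a constant factor.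
-/

section Minors

variable {α V : Type*} {G : SimpleGraph V}

/-- `G` has a non-null minor of density at least `d`. The minor lives on some `Fin m` so that the
notion involves no quantification over types. -/
def HasDenseMinor (G : SimpleGraph V) (d : ℝ) : Prop :=
  ∃ (m : ℕ) (H : SimpleGraph (Fin m)), 0 < m ∧ IsMinor H G ∧ d ≤ density H

theorem IsMinor.refl (G : SimpleGraph V) : IsMinor G G := by
  refine ⟨fun v => {v}, fun u v huv => Set.disjoint_singleton.2 huv, fun v => ?_,
    fun u v huv => ⟨u, rfl, v, rfl, huv⟩⟩
  rw [induce_singleton_eq_top]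
  exact connected_top

theorem IsMinor.congr_left {β : Type*} {H : SimpleGraph α} {H' : SimpleGraph β} (e : H ≃g H')
    (h : IsMinor H G) : IsMinor H' G := by
  obtain ⟨μ, hdisj, hconn, hadj⟩ := h
  exact ⟨μ ∘ e.symm, fun u v huv => hdisj _ _ (e.symm.injective.ne huv), fun v => hconn _,
    fun u v huv => hadj _ _ (e.symm.map_adj_iff.2 huv)⟩

theorem density_congr {β : Type*} {H : SimpleGraph α} {H' : SimpleGraph β} (e : H ≃g H') :
    density H = density H' := by
  rw [density, density, ← Nat.card_coe_set_eq, ← Nat.card_coe_set_eq,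
    Nat.card_congr e.mapEdgeSet, Nat.card_congr e.toEquiv]

theorem IsMinor.hasDenseMinor [Finite α] [Nonempty α] {H : SimpleGraph α} {d : ℝ}
    (h : IsMinor H G) (hd : d ≤ density H) : HasDenseMinor G d :=
  have := Fintype.ofFinite α
  ⟨Fintype.card α, H.overFin rfl, Fintype.card_pos, h.congr_left (H.overFinIso rfl),
    hd.trans_eq (density_congr (H.overFinIso rfl))⟩

theorem isMinor_map {f : V → α} (hf : ∀ a, (G.induce (f ⁻¹' {a})).Connected) :
    IsMinor (G.map f) G := by
  refine ⟨fun a => f ⁻¹' {a}, fun a b hab => ?_, hf, ?_⟩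
  · exact (Set.disjoint_singleton.2 hab).preimage f
  · rintro _ _ ⟨-, x, y, hxy, rfl, rfl⟩
    exact ⟨x, rfl, y, rfl, hxy⟩

theorem card_le_ncard_edgeSet_map [Finite α] {f : V → α} {S : Finset (Sym2 V)}
    (hS : ↑S ⊆ G.edgeSet) (hdiag : ∀ e ∈ S, ¬ (e.map f).IsDiag)
    (hinj : Set.InjOn (Sym2.map f) S) : S.card ≤ (G.map f).edgeSet.ncard := by
  rw [← Set.ncard_coe_finset, ← hinj.ncard_image]
  refine Set.ncard_le_ncard ?_
  rintro _ ⟨e, he, rfl⟩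
  induction e with
  | _ x y => exact map_adj_apply' (hS he) (hdiag _ he)

end Minors

/-- A matching whose edges `left i ~ right i` are listed in the order in which they are contracted.
The set `used i` is allowed to contain further vertices besides the ends of the earlier edges. -/
structure OrderedMatching {V : Type*} (G : SimpleGraph V) (ι : Type*) [LT ι] where
  left : ι → V
  right : ι → V
  used : ι → Finset V
  adj i : G.Adj (left i) (right i)
  left_notMem_used i : left i ∉ used i
  right_notMem_used i : right i ∉ used i
  left_mem_used {i j} : j < i → left j ∈ used i
  right_mem_used {i j} : j < i → right j ∈ used i

namespace OrderedMatching

variable {V ι : Type*} {G : SimpleGraph V} [LinearOrder ι] (M : OrderedMatching G ι)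

theorem left_injective : Function.Injective M.left :=
  Function.Injective.of_lt_imp_ne fun _ j hij h => M.left_notMem_used j (h ▸ M.left_mem_used hij)

theorem right_injective : Function.Injective M.right :=
  Function.Injective.of_lt_imp_ne fun _ j hij h => M.right_notMem_used j (h ▸ M.right_mem_used hij)

theorem left_ne_right (i j : ι) : M.left i ≠ M.right j := by
  intro h
  rcases lt_trichotomy i j with hij | rfl | hij
  · exact M.right_notMem_used j (h ▸ M.left_mem_used hij)
  · exact (M.adj i).ne h
  · exact M.left_notMem_used i (h ▸ M.right_mem_used hij)

/-- The map contracting every matching edge onto its right end. -/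
noncomputable def proj : V → V :=
  Function.extend M.left M.right id

theorem proj_left (i : ι) : M.proj (M.left i) = M.right i :=
  M.left_injective.extend_apply _ _ _

theorem proj_eq_self {x : V} (hx : ∀ i, M.left i ≠ x) : M.proj x = x :=
  Function.extend_apply' _ _ _ fun ⟨i, hi⟩ => hx i hi

theorem eq_or_exists_of_proj_eq {x y : V} (h : M.proj x = M.proj y) :
    x = y ∨ ∃ i, s(x, y) = s(M.left i, M.right i) := by
  by_cases hx : ∃ i, M.left i = x <;> by_cases hy : ∃ i, M.left i = y
  · obtain ⟨i, rfl⟩ := hx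
    obtain ⟨j, rfl⟩ := hy
    rw [M.proj_left, M.proj_left] at h
    exact Or.inl (congrArg M.left (M.right_injective h))
  · obtain ⟨i, rfl⟩ := hx
    rw [M.proj_left, M.proj_eq_self (not_exists.1 hy)] at h
    exact Or.inr ⟨i, congrArg (s(M.left i, ·)) h.symm⟩
  · obtain ⟨i, rfl⟩ := hy
    rw [M.proj_left, M.proj_eq_self (not_exists.1 hx)] at h
    exact Or.inr ⟨i, Sym2.eq_iff.2 (Or.inr ⟨h, rfl⟩)⟩
  · rw [M.proj_eq_self (not_exists.1 hx), M.proj_eq_self (not_exists.1 hy)] at h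
    exact Or.inl h

theorem range_proj_subset : Set.range M.proj ⊆ (Set.range M.left)ᶜ := by
  rintro _ ⟨x, rfl⟩
  by_cases hx : ∃ i, M.left i = x
  · obtain ⟨i, rfl⟩ := hx
    rw [M.proj_left]
    exact fun ⟨j, hj⟩ => M.left_ne_right j i hj
  · rwa [M.proj_eq_self (not_exists.1 hx)]

theorem ncard_range_proj_add_card_le [Finite V] [Fintype ι] :
    (Set.range M.proj).ncard + Fintype.card ι ≤ Nat.card V := by
  have hleft : (Set.range M.left).ncard = Fintype.card ι := by
    rw [← Nat.card_coe_set_eq, Nat.card_range_of_injective M.left_injective,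
      Nat.card_eq_fintype_card]
  have hproj := Set.ncard_le_ncard M.range_proj_subset
  have hcompl := Set.ncard_add_ncard_compl (Set.range M.left)
  omega

/-- The contraction of all matching edges. -/
noncomputable def contraction : SimpleGraph (Set.range M.proj) :=
  G.map (Set.rangeFactorization M.proj)

theorem isMinor_contraction : IsMinor M.contraction G := by
  refine isMinor_map ?_
  rintro ⟨_, x, rfl⟩
  have hclique : G.IsClique (Set.rangeFactorization M.proj ⁻¹' {⟨M.proj x, x, rfl⟩}) := by
    intro y hy z hz hyz
    have hproj : M.proj y = M.proj z := congrArg Subtype.val (hy.trans hz.symm)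
    obtain hyz' | ⟨i, hi⟩ := M.eq_or_exists_of_proj_eq hproj
    · exact absurd hyz' hyz
    · rw [← mem_edgeSet, hi]
      exact M.adj i
  rw [induce_eq_top.2 hclique]
  have : Nonempty (Set.rangeFactorization M.proj ⁻¹' {⟨M.proj x, x, rfl⟩}) := ⟨⟨x, rfl⟩⟩
  exact connected_top

variable [Fintype V] [DecidableEq V] [DecidableRel G.Adj]

/-- Edges whose deletion, over all `i`, leaves no loop and no pair of parallel edges after
contracting the matching: the matching edge, the edges from its left end to the common neighbours,
and the edges from its right end to `used i`. -/
def lostEdges (i : ι) : Finset (Sym2 V) :=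
  insert s(M.left i, M.right i)
    ((G.neighborFinset (M.left i) ∩ G.neighborFinset (M.right i)).image (s(M.left i, ·)) ∪
      (G.neighborFinset (M.right i) ∩ M.used i).image (s(M.right i, ·)))

/-- The number of edges given up in order to contract the `i`-th edge of the matching, an upper
bound for the size of `lostEdges`. -/
def loss (i : ι) : ℕ :=
  (G.neighborFinset (M.left i) ∩ G.neighborFinset (M.right i)).card +
    (G.neighborFinset (M.right i) ∩ M.used i).card + 1

theorem card_lostEdges_le (i : ι) : (M.lostEdges i).card ≤ M.loss i := by
  refine (Finset.card_insert_le _ _).trans (Nat.succ_le_succ ?_)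
  exact (Finset.card_union_le _ _).trans (add_le_add Finset.card_image_le Finset.card_image_le)

theorem mk_left_right_mem_lostEdges (i : ι) : s(M.left i, M.right i) ∈ M.lostEdges i :=
  Finset.mem_insert_self _ _

theorem mk_left_mem_lostEdges {i : ι} {x : V} (hl : G.Adj (M.left i) x)
    (hr : G.Adj (M.right i) x) : s(M.left i, x) ∈ M.lostEdges i := by
  refine Finset.mem_insert_of_mem (Finset.mem_union_left _ (Finset.mem_image_of_mem _ ?_))
  simp only [Finset.mem_inter, mem_neighborFinset, hl, hr, and_self]

theorem mk_right_mem_lostEdges {i : ι} {x : V} (hx : x ∈ M.used i)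
    (hr : G.Adj (M.right i) x) : s(M.right i, x) ∈ M.lostEdges i := by
  refine Finset.mem_insert_of_mem (Finset.mem_union_right _ (Finset.mem_image_of_mem _ ?_))
  simp only [Finset.mem_inter, mem_neighborFinset, hx, hr, and_self]

variable [Fintype ι]

/-- The edges of `G` that are not given up for any matching edge. -/
def keptEdges : Finset (Sym2 V) :=
  G.edgeFinset \ Finset.univ.biUnion M.lostEdges

theorem mk_mem_keptEdges {x y : V} :
    s(x, y) ∈ M.keptEdges ↔ G.Adj x y ∧ ∀ i, s(x, y) ∉ M.lostEdges i := by
  simp only [keptEdges, Finset.mem_sdiff, mem_edgeFinset, mem_edgeSet, Finset.mem_biUnion,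
    Finset.mem_univ, true_and, not_exists]

theorem proj_ne_of_mem_keptEdges {x y : V} (h : s(x, y) ∈ M.keptEdges) :
    M.proj x ≠ M.proj y := by
  intro hproj
  obtain ⟨hxy, hlost⟩ := M.mk_mem_keptEdges.1 h
  obtain rfl | ⟨i, hi⟩ := M.eq_or_exists_of_proj_eq hproj
  · exact hxy.ne rfl
  · exact hlost i (hi ▸ M.mk_left_right_mem_lostEdges i)

theorem eq_of_mem_keptEdges_of_proj_eq_right {x y y' : V} (h : s(x, y) ∈ M.keptEdges)
    (h' : s(x, y') ∈ M.keptEdges) (hy : M.proj y = M.proj y') : y = y' := by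
  rw [M.mk_mem_keptEdges] at h h'
  obtain rfl | ⟨i, hi⟩ := M.eq_or_exists_of_proj_eq hy
  · rfl
  obtain ⟨rfl, rfl⟩ | ⟨rfl, rfl⟩ := Sym2.eq_iff.1 hi
  · exact absurd (Sym2.eq_swap ▸ M.mk_left_mem_lostEdges h.1.symm h'.1.symm) (h.2 i)
  · exact absurd (Sym2.eq_swap ▸ M.mk_left_mem_lostEdges h'.1.symm h.1.symm) (h'.2 i)

theorem mk_right_notMem_keptEdges {i : ι} {x : V} (hx : x ∈ M.used i) :
    s(M.right i, x) ∉ M.keptEdges := fun h =>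
  (M.mk_mem_keptEdges.1 h).2 i (M.mk_right_mem_lostEdges hx (M.mk_mem_keptEdges.1 h).1)

theorem notMem_keptEdges_of_lt {i j : ι} {x x' y y' : V} (hji : j < i)
    (hx : s(x, x') = s(M.left i, M.right i)) (hy : s(y, y') = s(M.left j, M.right j))
    (h : s(x, y) ∈ M.keptEdges) : s(x', y') ∉ M.keptEdges := by
  have hused : y ∈ M.used i ∧ y' ∈ M.used i := by
    obtain ⟨rfl, rfl⟩ | ⟨rfl, rfl⟩ := Sym2.eq_iff.1 hy <;>
      simp only [M.left_mem_used hji, M.right_mem_used hji, and_self]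
  obtain ⟨rfl, rfl⟩ | ⟨rfl, rfl⟩ := Sym2.eq_iff.1 hx
  · exact M.mk_right_notMem_keptEdges hused.2
  · exact absurd h (M.mk_right_notMem_keptEdges hused.1)

theorem eq_and_eq_of_mem_keptEdges {x x' y y' : V} (h : s(x, y) ∈ M.keptEdges)
    (h' : s(x', y') ∈ M.keptEdges) (hx : M.proj x = M.proj x') (hy : M.proj y = M.proj y') :
    x = x' ∧ y = y' := by
  obtain rfl | ⟨i, hi⟩ := M.eq_or_exists_of_proj_eq hx
  · exact ⟨rfl, M.eq_of_mem_keptEdges_of_proj_eq_right h h' hy⟩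
  obtain rfl | ⟨j, hj⟩ := M.eq_or_exists_of_proj_eq hy
  · rw [Sym2.eq_swap] at h h'
    exact ⟨M.eq_of_mem_keptEdges_of_proj_eq_right h h' hx, rfl⟩
  exfalso
  rcases lt_trichotomy i j with hij | rfl | hij
  · rw [Sym2.eq_swap] at h h'
    exact M.notMem_keptEdges_of_lt hij hj hi h h'
  · apply M.proj_ne_of_mem_keptEdges h
    obtain ⟨rfl, rfl⟩ | ⟨rfl, rfl⟩ := Sym2.eq_iff.1 (hi.trans hj.symm)
    exacts [rfl, hx]
  · exact M.notMem_keptEdges_of_lt hij hi hj h h'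

theorem injOn_map_proj_keptEdges : Set.InjOn (Sym2.map M.proj) M.keptEdges := by
  rintro ⟨x, y⟩ h ⟨x', y'⟩ h' hproj
  rcases Sym2.eq_iff.1 hproj with ⟨hx, hy⟩ | ⟨hx, hy⟩
  · obtain ⟨rfl, rfl⟩ := M.eq_and_eq_of_mem_keptEdges h h' hx hy
    rfl
  · obtain ⟨rfl, rfl⟩ := M.eq_and_eq_of_mem_keptEdges h (Sym2.eq_swap ▸ h') hx hy
    exact Sym2.eq_swap

theorem card_edgeFinset_le_ncard_edgeSet_contraction_add :
    G.edgeFinset.card ≤ M.contraction.edgeSet.ncard + ∑ i, M.loss i := by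
  have hkept : M.keptEdges.card ≤ M.contraction.edgeSet.ncard := by
    refine card_le_ncard_edgeSet_map (fun e he => ?_) (fun e he => ?_) ?_
    · exact mem_edgeFinset.1 (Finset.mem_sdiff.1 he).1
    · induction e with
      | _ x y => exact fun h => M.proj_ne_of_mem_keptEdges he (congrArg Subtype.val h)
    · refine fun e he e' he' h => M.injOn_map_proj_keptEdges he he' ?_
      simpa only [Sym2.map_map, Set.coe_comp_rangeFactorization] using
        congrArg (Sym2.map Subtype.val) h
  have hlost : (Finset.univ.biUnion M.lostEdges).card ≤ ∑ i, M.loss i :=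
    Finset.card_biUnion_le.trans (Finset.sum_le_sum fun i _ => M.card_lostEdges_le i)
  have hsdiff := Finset.le_card_sdiff (Finset.univ.biUnion M.lostEdges) G.edgeFinset
  rw [← keptEdges] at hsdiff
  omega

theorem hasDenseMinor [Nonempty V] {ℓ d : ℝ} (hloss : ∀ i, (M.loss i : ℝ) ≤ ℓ) (hd₀ : 0 ≤ d)
    (hd : d * (Fintype.card V - Fintype.card ι) ≤ G.edgeFinset.card - Fintype.card ι * ℓ) :
    HasDenseMinor G d := by
  have hrange : (Set.range M.proj).Nonempty := Set.range_nonempty _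
  have : Nonempty (Set.range M.proj) := hrange.to_subtype
  refine M.isMinor_contraction.hasDenseMinor ?_
  have hpos : (0 : ℝ) < (Set.range M.proj).ncard := by
    exact_mod_cast (Set.ncard_pos).2 hrange
  rw [density, Nat.card_coe_set_eq, le_div_iff₀ hpos]
  have hverts : ((Set.range M.proj).ncard : ℝ) ≤ Fintype.card V - Fintype.card ι := by
    rw [le_sub_iff_add_le, ← Nat.card_eq_fintype_card (α := V)]
    exact_mod_cast M.ncard_range_proj_add_card_le
  have hedges : (G.edgeFinset.card : ℝ) ≤ M.contraction.edgeSet.ncard + ∑ i, (M.loss i : ℝ) := by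
    exact_mod_cast M.card_edgeFinset_le_ncard_edgeSet_contraction_add
  have hsum : ∑ i, (M.loss i : ℝ) ≤ Fintype.card ι * ℓ := by
    rw [← nsmul_eq_mul]
    exact Finset.sum_le_card_nsmul Finset.univ _ ℓ fun i _ => hloss i
  calc d * (Set.range M.proj).ncard ≤ d * (Fintype.card V - Fintype.card ι) := by gcongr
    _ ≤ M.contraction.edgeSet.ncard := by linarith

end OrderedMatching
section Degrees

variable {V : Type*} {G : SimpleGraph V}

theorem exists_ncard_neighborSet_le_two_mul_subDensity [Finite V] (J : G.Subgraph)
    (hJ : J.verts.Nonempty) :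
    ∃ u ∈ J.verts, ((J.neighborSet u).ncard : ℝ) ≤ 2 * subDensity J := by
  classical
  have := Fintype.ofFinite V
  have hverts : J.verts.toFinset.Nonempty := Set.toFinset_nonempty.2 hJ
  have hdeg (u : V) : (J.neighborSet u).ncard = J.spanningCoe.degree u := by
    rw [Subgraph.degree_spanningCoe, Set.ncard_eq_toFinset_card', Set.toFinset_card,
      Subgraph.degree]
  have hedges : J.edgeSet.ncard = J.spanningCoe.edgeFinset.card := by
    rw [← Subgraph.edgeSet_spanningCoe, ← coe_edgeFinset, Set.ncard_coe_finset]
  have hsum : ∑ u ∈ J.verts.toFinset, ((J.neighborSet u).ncard : ℝ) ≤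
      ∑ _u ∈ J.verts.toFinset, 2 * subDensity J := by
    have hpos : (0 : ℝ) < J.verts.ncard := by exact_mod_cast (Set.ncard_pos).2 hJ
    calc ∑ u ∈ J.verts.toFinset, ((J.neighborSet u).ncard : ℝ)
        ≤ ∑ u, (J.spanningCoe.degree u : ℝ) := by
          simp only [hdeg]
          exact Finset.sum_le_univ_sum_of_nonneg fun _ => Nat.cast_nonneg _
      _ = 2 * J.edgeSet.ncard := by
          rw [hedges]
          exact_mod_cast J.spanningCoe.sum_degrees_eq_twice_card_edges
      _ = ∑ _u ∈ J.verts.toFinset, 2 * subDensity J := by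
          rw [Finset.sum_const, nsmul_eq_mul, ← Set.ncard_eq_toFinset_card', subDensity]
          field_simp
  obtain ⟨u, hu, hle⟩ := Finset.exists_le_of_sum_le hverts hsum
  exact ⟨u, Set.mem_toFinset.1 hu, hle⟩

variable [Fintype V] [DecidableRel G.Adj]

theorem sum_degree_le_of_forall_le_degree {D : ℝ} (hmin : ∀ v, D ≤ G.degree v) (S : Finset V) :
    ∑ v ∈ S, (G.degree v : ℝ) ≤
      D * S.card + (2 * G.edgeFinset.card - D * Fintype.card V) := by
  have hsum : ∑ v, (G.degree v : ℝ) = 2 * G.edgeFinset.card := by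
    exact_mod_cast G.sum_degrees_eq_twice_card_edges
  have hexcess : ∑ v ∈ S, ((G.degree v : ℝ) - D) ≤ ∑ v, ((G.degree v : ℝ) - D) :=
    Finset.sum_le_univ_sum_of_nonneg fun v => sub_nonneg.2 (hmin v)
  simp only [Finset.sum_sub_distrib, Finset.sum_const, nsmul_eq_mul, Finset.card_univ,
    hsum] at hexcess
  linarith

theorem mul_card_filter_lt_degree_le {D : ℝ} (hmin : ∀ v, D ≤ G.degree v) :
    D * (Finset.univ.filter fun v => 2 * D < G.degree v).card ≤
      2 * G.edgeFinset.card - D * Fintype.card V := by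
  have hle := sum_degree_le_of_forall_le_degree hmin
    (Finset.univ.filter fun v => 2 * D < (G.degree v : ℝ))
  have hge := Finset.card_nsmul_le_sum (Finset.univ.filter fun v => 2 * D < (G.degree v : ℝ))
    (fun v => (G.degree v : ℝ)) (2 * D) fun v hv => (Finset.mem_filter.1 hv).2.le
  rw [nsmul_eq_mul] at hge
  linarith

variable [DecidableEq V]

theorem sum_card_neighborFinset_inter_le (S T : Finset V) :
    ∑ v ∈ S, (G.neighborFinset v ∩ T).card ≤ ∑ w ∈ T, G.degree w := by
  have habove (v : V) : G.neighborFinset v ∩ T = T.bipartiteAbove G.Adj v := by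
    ext w
    simp only [Finset.mem_inter, mem_neighborFinset, Finset.mem_bipartiteAbove, and_comm]
  have hbelow (w : V) : S.bipartiteBelow G.Adj w ⊆ G.neighborFinset w := by
    intro v hv
    exact (mem_neighborFinset _ _ _).2 ((Finset.mem_bipartiteBelow _).1 hv).2.symm
  simp only [habove, Finset.sum_card_bipartiteAbove_eq_sum_card_bipartiteBelow]
  exact Finset.sum_le_sum fun w _ => Finset.card_le_card (hbelow w)

theorem mul_card_filter_lt_card_neighborFinset_inter_le (t : ℝ) (S : Finset V) :
    t * (Finset.univ.filter fun v => t < (G.neighborFinset v ∩ S).card).card ≤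
      ∑ w ∈ S, (G.degree w : ℝ) := by
  set B := Finset.univ.filter fun v => t < ((G.neighborFinset v ∩ S).card : ℝ)
  calc t * B.card = B.card • t := by rw [nsmul_eq_mul, mul_comm]
    _ ≤ ∑ v ∈ B, ((G.neighborFinset v ∩ S).card : ℝ) :=
        Finset.card_nsmul_le_sum _ _ _ fun v hv => (Finset.mem_filter.1 hv).2.le
    _ ≤ ∑ w ∈ S, (G.degree w : ℝ) := by exact_mod_cast sum_card_neighborFinset_inter_le B S

theorem exists_notMem_degree_le_card_neighborFinset_inter_le {D : ℝ} (hD : 0 < D)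
    (hmin : ∀ v, D ≤ G.degree v) (Y : Finset V)
    (hY : 9 * D * Y.card + 18 * G.edgeFinset.card < 10 * D * Fintype.card V) :
    ∃ v ∉ Y, (G.degree v : ℝ) ≤ 2 * D ∧ ((G.neighborFinset v ∩ Y).card : ℝ) ≤ D / 8 := by
  set Q := Finset.univ.filter fun v => 2 * D < (G.degree v : ℝ) with hQ
  set B := Finset.univ.filter fun v => D / 8 < ((G.neighborFinset v ∩ Y).card : ℝ) with hB
  have hQcard : D * Q.card ≤ _ := mul_card_filter_lt_degree_le hmin
  have hBcard : D / 8 * B.card ≤ _ :=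
    (mul_card_filter_lt_card_neighborFinset_inter_le (D / 8) Y).trans
      (sum_degree_le_of_forall_le_degree hmin Y)
  have hcard : (Y ∪ Q ∪ B).card < Fintype.card V := by
    have hunion : ((Y ∪ Q ∪ B).card : ℝ) ≤ Y.card + Q.card + B.card := by
      exact_mod_cast (Finset.card_union_le _ _).trans
        (Nat.add_le_add_right (Finset.card_union_le _ _) _)
    have hmul := mul_le_mul_of_nonneg_left hunion hD.le
    have : D * (Y ∪ Q ∪ B).card < D * Fintype.card V := by linarith
    exact_mod_cast lt_of_mul_lt_mul_left this hD.le
  obtain ⟨v, hv⟩ : ∃ v, v ∉ Y ∪ Q ∪ B := by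
    by_contra! hall
    exact hcard.ne ((Finset.card_eq_iff_eq_univ _).2 (Finset.eq_univ_iff_forall.2 hall))
  simp only [hQ, hB, Finset.mem_union, Finset.mem_filter, Finset.mem_univ, true_and, not_or,
    not_lt] at hv
  exact ⟨v, hv.1.1, hv.1.2, hv.2⟩

theorem exists_adj_card_common_le {D : ℝ} (hD : 0 < D) (hmin : ∀ v, D ≤ G.degree v)
    (Y : Finset V) (hY : 9 * D * Y.card + 18 * G.edgeFinset.card < 10 * D * Fintype.card V)
    (hsparse : ∀ A : Finset V, Disjoint A Y → (A.card : ℝ) ≤ 2 * D →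
      subDensity ((⊤ : G.Subgraph).induce A) < D / 16) :
    ∃ u ∉ Y, ∃ v ∉ Y, G.Adj u v ∧
      ((G.neighborFinset u ∩ G.neighborFinset v).card : ℝ) ≤ D / 4 ∧
      ((G.neighborFinset v ∩ Y).card : ℝ) ≤ D / 8 := by
  obtain ⟨v, hvY, hvdeg, hvinter⟩ :=
    exists_notMem_degree_le_card_neighborFinset_inter_le hD hmin Y hY
  set A := G.neighborFinset v \ Y with hA
  have hcard : (A.card : ℝ) + (G.neighborFinset v ∩ Y).card = G.degree v := by
    exact_mod_cast Finset.card_sdiff_add_card_inter (G.neighborFinset v) Y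
  have hAne : A.Nonempty := by
    have : (0 : ℝ) < A.card := by linarith [hmin v]
    exact Finset.card_pos.1 (by exact_mod_cast this)
  have hAle : (A.card : ℝ) ≤ 2 * D := by
    linarith [Nat.cast_nonneg (α := ℝ) (G.neighborFinset v ∩ Y).card]
  obtain ⟨u, huA, hu⟩ := exists_ncard_neighborSet_le_two_mul_subDensity
    ((⊤ : G.Subgraph).induce A) (Finset.coe_nonempty.2 hAne)
  have huA : u ∈ A := huA
  have huY : u ∉ Y := (Finset.mem_sdiff.1 huA).2
  have hvu : G.Adj v u := (mem_neighborFinset _ _ _).1 (Finset.mem_sdiff.1 huA).1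
  refine ⟨u, huY, v, hvY, hvu.symm, ?_, hvinter⟩
  have hneighbors : ((⊤ : G.Subgraph).induce A).neighborSet u = ↑(G.neighborFinset u ∩ A) := by
    ext w
    simp [huA, and_comm]
  have hcommon : G.neighborFinset u ∩ G.neighborFinset v ⊆
      (G.neighborFinset u ∩ A) ∪ (G.neighborFinset v ∩ Y) := by
    intro w
    simp only [hA, Finset.mem_inter, Finset.mem_union, Finset.mem_sdiff]
    tauto
  have hcommon_card : ((G.neighborFinset u ∩ G.neighborFinset v).card : ℝ) ≤
      (G.neighborFinset u ∩ A).card + (G.neighborFinset v ∩ Y).card := by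
    exact_mod_cast (Finset.card_le_card hcommon).trans (Finset.card_union_le _ _)
  rw [hneighbors, Set.ncard_coe_finset] at hu
  linarith [hsparse A Finset.sdiff_disjoint hAle]

end Degrees

theorem exists_greedy_sequence {α β : Type*} [DecidableEq α] [Nonempty β] (N : ℕ) (c : ℝ)
    (foot : β → Finset α) (P : Finset α → β → Prop)
    (h : ∀ i < N, ∀ Y : Finset α, (Y.card : ℝ) ≤ c * i → ∃ x, P Y x ∧ ((foot x).card : ℝ) ≤ c) :
    ∃ b : ℕ → β, ∀ i < N,
      P ((Finset.range i).biUnion fun j => foot (b j)) (b i) ∧ ((foot (b i)).card : ℝ) ≤ c := by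
  induction N with
  | zero => exact ⟨fun _ => Classical.arbitrary β, fun i hi => absurd hi i.not_lt_zero⟩
  | succ N ih =>
    obtain ⟨b, hb⟩ := ih fun i hi => h i (Nat.lt_succ_of_lt hi)
    have hcard : (((Finset.range N).biUnion fun j => foot (b j)).card : ℝ) ≤ c * N := by
      calc (((Finset.range N).biUnion fun j => foot (b j)).card : ℝ)
          ≤ ∑ j ∈ Finset.range N, ((foot (b j)).card : ℝ) := by
            exact_mod_cast Finset.card_biUnion_le
        _ ≤ (Finset.range N).card • c :=
            Finset.sum_le_card_nsmul _ _ _ fun j hj => (hb j (Finset.mem_range.1 hj)).2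
        _ = c * N := by rw [Finset.card_range, nsmul_eq_mul, mul_comm]
    obtain ⟨x, hx⟩ := h N N.lt_succ_self _ hcard
    have hunion (i : ℕ) (hi : i ≤ N) :
        ((Finset.range i).biUnion fun j => foot (Function.update b N x j)) =
          (Finset.range i).biUnion fun j => foot (b j) := by
      refine Finset.biUnion_congr rfl fun j hj => ?_
      rw [Function.update_of_ne (by grind)]
    refine ⟨Function.update b N x, fun i hi => ?_⟩
    rw [hunion i (Nat.le_of_lt_succ hi)]
    obtain hi | rfl := (Nat.le_of_lt_succ hi).lt_or_eq
    · rw [Function.update_of_ne hi.ne]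
      exact hb i hi
    · rwa [Function.update_self]

theorem exists_orderedMatching {V : Type*} {G : SimpleGraph V} (s : ℕ)
    (X : Finset V) (P : Finset V → V → V → Prop)
    (h : ∀ Y, X ⊆ Y → Y.card ≤ X.card + 2 * s → ∃ u ∉ Y, ∃ v ∉ Y, G.Adj u v ∧ P Y u v) :
    ∃ M : OrderedMatching G (Fin s), ∀ i, P (M.used i) (M.left i) (M.right i) := by
  classical
  obtain ⟨w, -⟩ := h X subset_rfl (Nat.le_add_right _ _)
  have : Nonempty V := ⟨w⟩
  let ends (e : V × V) : Finset V := {e.1, e.2}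
  obtain ⟨b, hb⟩ := exists_greedy_sequence s 2 ends
    (fun Y e => e.1 ∉ X ∪ Y ∧ e.2 ∉ X ∪ Y ∧ G.Adj e.1 e.2 ∧ P (X ∪ Y) e.1 e.2)
    fun i hi Y hY => by
      have hYi : Y.card ≤ 2 * i := by exact_mod_cast hY
      have hcard : (X ∪ Y).card ≤ X.card + 2 * s :=
        (Finset.card_union_le X Y).trans (by omega)
      obtain ⟨u, hu, v, hv, huv⟩ := h (X ∪ Y) Finset.subset_union_left hcard
      exact ⟨(u, v), ⟨hu, hv, huv⟩, by exact_mod_cast Finset.card_le_two⟩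
  let used (i : ℕ) : Finset V := X ∪ (Finset.range i).biUnion fun j => ends (b j)
  have hends {i j : ℕ} (hji : j < i) : ends (b j) ⊆ used i :=
    (Finset.subset_biUnion_of_mem (fun k => ends (b k)) (Finset.mem_range.2 hji)).trans
      Finset.subset_union_right
  let M : OrderedMatching G (Fin s) :=
    { left := fun i => (b i).1
      right := fun i => (b i).2
      used := fun i => used i
      adj := fun i => (hb i i.2).1.2.2.1
      left_notMem_used := fun i => (hb i i.2).1.1
      right_notMem_used := fun i => (hb i i.2).1.2.1
      left_mem_used := fun h => hends h (Finset.mem_insert_self _ _)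
      right_mem_used := fun h =>
        hends h (Finset.mem_insert_of_mem (Finset.mem_singleton_self _)) }
  exact ⟨M, fun i => (hb i i.2).1.2.2.2⟩

section Increment

variable {V : Type*} [Fintype V] {G : SimpleGraph V} [DecidableRel G.Adj]

theorem exists_orderedMatching_loss_le [DecidableEq V] {D : ℝ} (hD : 16 ≤ D)
    (hmin : ∀ v, D ≤ G.degree v) (X : Finset V) (s : ℕ)
    (hs : 9 * D * (X.card + 2 * s) + 18 * G.edgeFinset.card < 10 * D * Fintype.card V)
    (hsparse : ∀ A : Finset V, Disjoint A X → (A.card : ℝ) ≤ 2 * D →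
      subDensity ((⊤ : G.Subgraph).induce A) < D / 16) :
    ∃ M : OrderedMatching G (Fin s), ∀ i, (M.loss i : ℝ) ≤ 7 / 16 * D := by
  obtain ⟨M, hM⟩ := exists_orderedMatching s X (fun Y u v =>
    ((G.neighborFinset u ∩ G.neighborFinset v).card : ℝ) ≤ D / 4 ∧
      ((G.neighborFinset v ∩ Y).card : ℝ) ≤ D / 8) fun Y hXY hY => by
    have hY' : (Y.card : ℝ) ≤ X.card + 2 * s := by exact_mod_cast hY
    have hDY : 9 * D * Y.card ≤ 9 * D * (X.card + 2 * s) := by gcongr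
    exact exists_adj_card_common_le (by linarith) hmin Y (by linarith) fun A hA =>
      hsparse A (hA.mono_right hXY)
  refine ⟨M, fun i => ?_⟩
  rw [OrderedMatching.loss]
  push_cast
  linarith [hM i]

theorem hasDenseMinor_of_forall_subDensity_lt {D : ℝ} (hD : 16 ≤ D)
    (hmin : ∀ v, D ≤ G.degree v) (hV : 100 ≤ Fintype.card V) (X : Finset V)
    (hX : 200 * X.card ≤ Fintype.card V)
    (hsparse : ∀ A : Finset V, Disjoint A X → (A.card : ℝ) ≤ 2 * D →
      subDensity ((⊤ : G.Subgraph).induce A) < D / 16) :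
    HasDenseMinor G ((1 + 1 / 200) * (D / 2)) := by
  classical
  have hVpos : 0 < Fintype.card V := by omega
  have : Nonempty V := Fintype.card_pos_iff.1 hVpos
  have hnpos : (0 : ℝ) < Fintype.card V := by exact_mod_cast hVpos
  by_cases hedges : (1 + 1 / 200) * (D / 2) * Fintype.card V ≤ G.edgeFinset.card
  · refine (IsMinor.refl G).hasDenseMinor ?_
    rwa [density, Nat.card_eq_fintype_card, ← coe_edgeFinset, Set.ncard_coe_finset,
      le_div_iff₀ hnpos]
  have hV' : (100 : ℝ) ≤ Fintype.card V := by exact_mod_cast hV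
  have hX' : 200 * (X.card : ℝ) ≤ Fintype.card V := by exact_mod_cast hX
  have hge := Nat.le_ceil (Fintype.card V / 25 : ℝ)
  have hlt := Nat.ceil_lt_add_one (a := (Fintype.card V / 25 : ℝ)) (by positivity)
  set s := ⌈(Fintype.card V / 25 : ℝ)⌉₊
  have hcard : D * (X.card + 2 * s) ≤ D * (21 / 200 * Fintype.card V) := by
    gcongr
    linarith
  obtain ⟨M, hM⟩ := exists_orderedMatching_loss_le hD hmin X s (by linarith) hsparse
  refine M.hasDenseMinor hM (by positivity) ?_
  have hmany : D * (Fintype.card V : ℝ) ≤ 2 * G.edgeFinset.card := by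
    have h := sum_degree_le_of_forall_le_degree hmin ∅
    rw [Finset.sum_empty, Finset.card_empty, Nat.cast_zero, mul_zero, zero_add] at h
    linarith
  have hDs : D * (Fintype.card V / 25) ≤ D * s := by gcongr
  rw [Fintype.card_fin]
  linarith

end Increment

theorem repeated_density_increment_general {W : Type*} [Fintype W] (G : SimpleGraph W) (K : ℕ)
    {D : ℝ} (hD : 16 ≤ D) (hmin : ∀ w, D ≤ (deg G w : ℝ))
    (hcard : 400 * K * D ≤ (Fintype.card W : ℝ)) :
    (∃ J : Fin K → G.Subgraph,
        (∀ i j, i ≠ j → Disjoint (J i).verts (J j).verts) ∧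
        ∀ i, ((J i).verts.ncard : ℝ) ≤ 2 * D ∧ D / 16 ≤ subDensity (J i)) ∨
      HasDenseMinor G ((1 + 1 / 200) * (D / 2)) := by
  classical
  refine or_iff_not_imp_right.2 fun hminor => ?_
  have hdeg (w : W) : D ≤ G.degree w := by
    have h := hmin w
    rwa [deg, Set.ncard_eq_toFinset_card', Set.toFinset_card, card_neighborSet_eq_degree] at h
  obtain ⟨A, hA⟩ := exists_greedy_sequence K (2 * D) id
    (fun Y A : Finset W => Disjoint A Y ∧ D / 16 ≤ subDensity ((⊤ : G.Subgraph).induce A))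
    fun i hi Y hY => by
      by_contra! hsparse
      have hK : (i : ℝ) + 1 ≤ K := by exact_mod_cast hi
      have hiK : D * (i + 1) ≤ D * K := by gcongr
      refine hminor (hasDenseMinor_of_forall_subDensity_lt hD hdeg ?_ Y ?_ fun A hAY hA => ?_)
      · have : 0 ≤ D * i := by positivity
        have : (100 : ℝ) ≤ Fintype.card W := by linarith
        exact_mod_cast this
      · have : 200 * (Y.card : ℝ) ≤ Fintype.card W := by linarith
        exact_mod_cast this
      · by_contra! hdense
        exact (hsparse A ⟨hAY, hdense⟩).not_ge hA
  have hdisj {i j : Fin K} (hij : i < j) : Disjoint (A j) (A i) :=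
    (hA j j.2).1.1.mono_right
      (Finset.subset_biUnion_of_mem (fun k => id (A k)) (Finset.mem_range.2 hij))
  refine ⟨fun i => (⊤ : G.Subgraph).induce (A i), fun i j hij => Finset.disjoint_coe.2 ?_,
    fun i => ⟨?_, (hA i i.2).1.2⟩⟩
  · exact hij.lt_or_gt.elim (fun h => (hdisj h).symm) hdisj
  · rw [Subgraph.induce_verts, Set.ncard_coe_finset]
    exact (hA i i.2).2

theorem repeated_density_increment :
    ∃ ε : ℝ, 0 < ε ∧ ∀ K : ℕ, 0 < K →
      ∃ ε' C : ℝ, 0 < ε' ∧ 1 ≤ C ∧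
        ∀ D : ℝ, C ≤ D →
          ∀ (W : Type) [Fintype W] (G : SimpleGraph W),
            (∀ w : W, D ≤ (deg G w : ℝ)) → C * D ≤ (Fintype.card W : ℝ) →
            ((∃ J : Fin K → G.Subgraph,
                (∀ i j, i ≠ j → Disjoint (J i).verts (J j).verts) ∧
                (∀ i, ((J i).verts.ncard : ℝ) ≤ D / ε ∧ ε * D ≤ subDensity (J i))) ∨
             (∃ (m : ℕ) (H : SimpleGraph (Fin m)), 0 < m ∧ IsMinor H G ∧
                (1 + ε') * (D / 2) ≤ density H)) := by
  refine ⟨1 / 16, by norm_num, fun K hK => ?_⟩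
  have hK' : (1 : ℝ) ≤ K := by exact_mod_cast hK
  refine ⟨1 / 200, 400 * K, by norm_num, by linarith, fun D hD W _ G hmin hcard => ?_⟩
  refine (repeated_density_increment_general G K (by linarith) hmin hcard).imp_left ?_
  rintro ⟨J, hdisj, hJ⟩
  exact ⟨J, hdisj, fun i => ⟨by linarith [(hJ i).1], by linarith [(hJ i).2]⟩⟩
end
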